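/- Let d ≥ 2, let Σ ⊂ GL_d(ℝ) be a compact subset, and let μ₀ be a Borel probability measure supported in Σ which is quasi-irreducible and satisfies L_1(μ₀) > L_2(μ₀). Then μ₀ has a unique stationary measure on projective space: any two μ₀-stationary Borel probability measures on ℙ(ℝ^d) coincide. -/

import Mathlib

open MeasureTheory Filter
open scoped LinearAlgebra.Projectivization

noncomputable section

abbrev GLd (d : ℕ) := GL (Fin d) ℝ
abbrev Ed (d : ℕ) := EuclideanSpace ℝ (Fin d)
abbrev Pd (d : ℕ) := ℙ ℝ (Ed d)

variable {d : ℕ}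

instance : MeasurableSpace (GLd d) := borel _
instance : BorelSpace (GLd d) := ⟨rfl⟩

instance : TopologicalSpace (Pd d) :=
  (instTopologicalSpaceQuotient : TopologicalSpace (Quotient (projectivizationSetoid ℝ (Ed d))))
instance : MeasurableSpace (Pd d) := borel _
instance : BorelSpace (Pd d) := ⟨rfl⟩

/-- The continuous linear map on Euclidean space induced by `g ∈ GL_d(ℝ)`. -/
def glCLM (g : GLd d) : Ed d →L[ℝ] Ed d :=
  Matrix.toEuclideanCLM (𝕜 := ℝ) (g : Matrix (Fin d) (Fin d) ℝ)

/-- The operator norm of `g ∈ GL_d(ℝ)`. -/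
def gnorm (g : GLd d) : ℝ := ‖glCLM g‖

lemma glCLM_leftInv (g : GLd d) (v : Ed d) : glCLM g⁻¹ (glCLM g v) = v := by
  have h : glCLM (d := d) g⁻¹ * glCLM g = 1 := by
    rw [glCLM, glCLM, ← map_mul]
    norm_cast
    rw [inv_mul_cancel g]
    exact map_one _
  calc glCLM g⁻¹ (glCLM g v) = (glCLM g⁻¹ * glCLM g) v := rfl
    _ = v := by rw [h]; rfl

lemma glLinear_injective (g : GLd d) : Function.Injective (glCLM g).toLinearMap :=
  Function.LeftInverse.injective (g := (glCLM g⁻¹)) (fun v => glCLM_leftInv g v)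

/-- The projective action of `g ∈ GL_d(ℝ)` on `ℙ(ℝ^d)`. -/
def pact (g : GLd d) : Pd d → Pd d :=
  Projectivization.map (glCLM g).toLinearMap (glLinear_injective g)

/-- The projective distance `δ` on `ℙ(ℝ^d)`, computed on representatives. -/
def pdelta (x y : Pd d) : ℝ :=
  Real.sqrt (‖x.rep‖ ^ 2 * ‖y.rep‖ ^ 2 - (inner ℝ x.rep y.rep : ℝ) ^ 2) /
    (‖x.rep‖ * ‖y.rep‖)

/-- Convolution of two measures on `GL_d(ℝ)`. -/
def mconv (μ ν : Measure (GLd d)) : Measure (GLd d) :=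
  (μ.prod ν).map (fun p => p.1 * p.2)

/-- `n`-fold convolution power of a measure on `GL_d(ℝ)`. -/
def mconvN (μ : Measure (GLd d)) : ℕ → Measure (GLd d)
  | 0 => Measure.dirac 1
  | n + 1 => if n = 0 then μ else mconv (mconvN μ n) μ

/-- The top Lyapunov exponent of a (compactly supported) measure on `GL_d(ℝ)`. -/
def L1 (μ : Measure (GLd d)) : ℝ :=
  limUnder atTop (fun n : ℕ => (n : ℝ)⁻¹ * ∫ g, Real.log (gnorm g) ∂(mconvN μ n))

/-- `N₂ g = s₁(g)s₂(g)`, the product of the two largest singular values. -/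
def N2 (g : GLd d) : ℝ :=
  sSup { x | ∃ p q : Ed d, ‖p‖ = 1 ∧ ‖q‖ = 1 ∧ (inner ℝ p q : ℝ) = 0 ∧
    x = Real.sqrt (‖glCLM g p‖ ^ 2 * ‖glCLM g q‖ ^ 2 -
      (inner ℝ (glCLM g p) (glCLM g q) : ℝ) ^ 2) }

/-- `L₁(μ) + L₂(μ)`. -/
def L12 (μ : Measure (GLd d)) : ℝ :=
  limUnder atTop (fun n : ℕ => (n : ℝ)⁻¹ * ∫ g, Real.log (N2 g) ∂(mconvN μ n))

/-- The second Lyapunov exponent. -/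
def L2 (μ : Measure (GLd d)) : ℝ := L12 μ - L1 μ

/-- The top Lyapunov exponent of the restriction of `μ` to an (invariant) subspace `V`. -/
def L1rest (μ : Measure (GLd d)) (V : Submodule ℝ (Ed d)) : ℝ :=
  limUnder atTop (fun n : ℕ => (n : ℝ)⁻¹ *
    ∫ g, Real.log ‖LinearMap.toContinuousLinearMap ((glCLM g).toLinearMap.domRestrict V)‖
      ∂(mconvN μ n))

/-- Quasi-irreducibility of a measure on `GL_d(ℝ)`. -/
def QuasiIrreducible (μ : Measure (GLd d)) : Prop :=
  ¬ ∃ V : Submodule ℝ (Ed d), V ≠ ⊥ ∧ V ≠ ⊤ ∧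
    (∀ᵐ g ∂μ, V.map (glCLM g).toLinearMap = V) ∧ L1rest μ V < L1 μ

/-- Irreducibility of a measure on `GL_d(ℝ)`. -/
def Irred (μ : Measure (GLd d)) : Prop :=
  ¬ ∃ V : Submodule ℝ (Ed d), V ≠ ⊥ ∧ V ≠ ⊤ ∧
    (∀ᵐ g ∂μ, V.map (glCLM g).toLinearMap = V)

/-- The Markov operator associated with a measure on `GL_d(ℝ)`. -/
def Qop (μ : Measure (GLd d)) (φ : Pd d → ℝ) : Pd d → ℝ :=
  fun v => ∫ g, φ (pact g v) ∂μ

/-- The average `α`-Hölder constant of a measure on `GL_d(ℝ)`. -/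
def kalpha (α : ℝ) (μ : Measure (GLd d)) : ℝ :=
  sSup { x | ∃ v₁ v₂ : Pd d, v₁ ≠ v₂ ∧
    x = ∫ g, (pdelta (pact g v₁) (pact g v₂) / pdelta v₁ v₂) ^ α ∂μ }

/-- The `α`-Hölder seminorm of an observable on `ℙ(ℝ^d)`. -/
def valpha (α : ℝ) (φ : Pd d → ℝ) : ℝ :=
  sSup { x | ∃ v₁ v₂ : Pd d, v₁ ≠ v₂ ∧ x = |φ v₁ - φ v₂| / pdelta v₁ v₂ ^ α }

/-- `φ` is `α`-Hölder: `v_α(φ) < ∞`. -/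
def IsHolder (α : ℝ) (φ : Pd d → ℝ) : Prop :=
  BddAbove { x | ∃ v₁ v₂ : Pd d, v₁ ≠ v₂ ∧ x = |φ v₁ - φ v₂| / pdelta v₁ v₂ ^ α }

/-- The total variation distance between two finite measures. -/
def tvDist (μ ν : Measure (GLd d)) [IsFiniteMeasure μ] [IsFiniteMeasure ν] : ℝ :=
  ((μ.toSignedMeasure - ν.toSignedMeasure).totalVariation Set.univ).toReal

/-- A measure is compactly supported. -/
def CompactlySupported (μ : Measure (GLd d)) : Prop :=
  ∃ K : Set (GLd d), IsCompact K ∧ μ Kᶜ = 0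

/-- `S` is the (topological) support of `μ`. -/
def IsSupport (μ : Measure (GLd d)) (S : Set (GLd d)) : Prop :=
  μ Sᶜ = 0 ∧ ∀ x ∈ S, ∀ U : Set (GLd d), IsOpen U → x ∈ U → 0 < μ U

/-- A measure `η` on `ℙ(ℝ^d)` is `μ`-stationary. -/
def Stationary (μ : Measure (GLd d)) (η : Measure (Pd d)) : Prop :=
  ∀ φ : Pd d → ℝ, Continuous φ → (∃ C, ∀ v, |φ v| ≤ C) →
    ∫ v, φ v ∂η = ∫ g, ∫ v, φ (pact g v) ∂η ∂μ


lemma glCLM_mul (g h : GLd d) : glCLM (g * h) = glCLM g * glCLM h := by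
  simp [glCLM]

lemma glCLM_mul_apply (g h : GLd d) (v : Ed d) : glCLM (g * h) v = glCLM g (glCLM h v) := by
  rw [glCLM_mul]; rfl

lemma glCLM_one : glCLM (1 : GLd d) = 1 := by
  simp [glCLM]

lemma glCLM_rightInv (g : GLd d) (v : Ed d) : glCLM g (glCLM g⁻¹ v) = v := by
  rw [← glCLM_mul_apply, mul_inv_cancel, glCLM_one]; rfl

lemma continuous_glCLM : Continuous (glCLM : GLd d → (Ed d →L[ℝ] Ed d)) := by
  have h : Continuous (fun M : Matrix (Fin d) (Fin d) ℝ =>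
      (Matrix.toEuclideanCLM (n := Fin d) (𝕜 := ℝ) M : Ed d →L[ℝ] Ed d)) :=
    LinearMap.continuous_of_finiteDimensional
      (Matrix.toEuclideanCLM (n := Fin d) (𝕜 := ℝ)).toAlgEquiv.toLinearMap
  exact h.comp Units.continuous_val

instance : SecondCountableTopology (Matrix (Fin d) (Fin d) ℝ) :=
  inferInstanceAs (SecondCountableTopology (Fin d → Fin d → ℝ))

instance : SecondCountableTopology (GLd d) := by
  have h0 : SecondCountableTopology (Matrix (Fin d) (Fin d) ℝ)ᵐᵒᵖ :=
    MulOpposite.opHomeomorph.symm.isEmbedding.secondCountableTopology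
  have h := (Units.isEmbedding_embedProduct (M := Matrix (Fin d) (Fin d) ℝ))
  exact h.secondCountableTopology

instance : IsTopologicalGroup (GLd d) := inferInstance
instance : MeasurableMul₂ (GLd d) := inferInstance

lemma glCLM_ne_zero (g : GLd d) {v : Ed d} (hv : v ≠ 0) : glCLM g v ≠ 0 := by
  intro h
  apply hv
  have := glCLM_leftInv g v
  rw [h, map_zero] at this
  exact this.symm

/-- Size of `g`. -/
def ell (g : GLd d) : ℝ := max (Real.log (gnorm g)) (Real.log (gnorm g⁻¹))

lemma gnorm_pos (hd : 0 < d) (g : GLd d) : 0 < gnorm g := by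
  have : Nonempty (Fin d) := ⟨⟨0, hd⟩⟩
  have : Nontrivial (Ed d) := inferInstance
  obtain ⟨v, hv⟩ := exists_ne (0 : Ed d)
  rw [gnorm, norm_pos_iff]
  intro h
  apply glCLM_ne_zero g hv
  rw [h]; rfl

lemma continuous_gnorm : Continuous (gnorm : GLd d → ℝ) := continuous_glCLM.norm

lemma continuous_ell (hd : 0 < d) : Continuous (ell : GLd d → ℝ) := by
  unfold ell
  refine Continuous.max ?_ ?_
  · exact continuous_gnorm.log (fun g => (gnorm_pos hd g).ne')
  · exact (continuous_gnorm.comp continuous_inv).log (fun g => (gnorm_pos hd _).ne')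

lemma gnorm_mul_le (g h : GLd d) : gnorm (g * h) ≤ gnorm g * gnorm h := by
  unfold gnorm
  rw [glCLM_mul]
  exact norm_mul_le _ _

lemma log_gnorm_mul_le (hd : 0 < d) (g h : GLd d) :
    Real.log (gnorm (g * h)) ≤ Real.log (gnorm g) + Real.log (gnorm h) := by
  rw [← Real.log_mul (gnorm_pos hd g).ne' (gnorm_pos hd h).ne']
  exact Real.log_le_log (gnorm_pos hd _) (gnorm_mul_le g h)

lemma ell_mul_le (hd : 0 < d) (g h : GLd d) : ell (g * h) ≤ ell g + ell h := by
  unfold ell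
  refine max_le ?_ ?_
  · exact (log_gnorm_mul_le hd g h).trans (add_le_add (le_max_left _ _) (le_max_left _ _))
  · rw [mul_inv_rev, add_comm]
    exact (log_gnorm_mul_le hd _ _).trans (add_le_add (le_max_right _ _) (le_max_right _ _))

lemma ell_one (hd : 0 < d) : ell (1 : GLd d) = 0 := by
  have : Nonempty (Fin d) := ⟨⟨0, hd⟩⟩
  have : Nontrivial (Ed d) := inferInstance
  have : gnorm (1 : GLd d) = 1 := by
    unfold gnorm; rw [glCLM_one]; exact norm_one
  simp [ell, this]

lemma log_norm_apply_le (hd : 0 < d) (g : GLd d) {v : Ed d} (hv : v ≠ 0) :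
    Real.log ‖glCLM g v‖ ≤ Real.log (gnorm g) + Real.log ‖v‖ := by
  rw [← Real.log_mul (gnorm_pos hd g).ne' (norm_ne_zero_iff.2 hv)]
  exact Real.log_le_log (norm_pos_iff.2 (glCLM_ne_zero g hv)) ((glCLM g).le_opNorm v)

lemma abs_log_norm_apply (hd : 0 < d) (g : GLd d) {v : Ed d} (hv : v ≠ 0) :
    |Real.log ‖glCLM g v‖ - Real.log ‖v‖| ≤ ell g := by
  rw [abs_le]
  have h1 := log_norm_apply_le hd g hv
  have h2 := log_norm_apply_le hd g⁻¹ (glCLM_ne_zero g hv)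
  rw [glCLM_leftInv] at h2
  have h3 : Real.log (gnorm g) ≤ ell g := le_max_left _ _
  have h4 : Real.log (gnorm g⁻¹) ≤ ell g := le_max_right _ _
  constructor <;> linarith

lemma ell_nonneg (hd : 0 < d) (g : GLd d) : 0 ≤ ell g := by
  have : Nonempty (Fin d) := ⟨⟨0, hd⟩⟩
  have : Nontrivial (Ed d) := inferInstance
  obtain ⟨v, hv⟩ := exists_ne (0 : Ed d)
  exact (abs_nonneg _).trans (abs_log_norm_apply hd g hv)

instance mconv_prob (μ ν : Measure (GLd d)) [IsProbabilityMeasure μ] [IsProbabilityMeasure ν] :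
    IsProbabilityMeasure (mconv μ ν) :=
  Measure.isProbabilityMeasure_map measurable_mul.aemeasurable

instance mconvN_prob (μ : Measure (GLd d)) [IsProbabilityMeasure μ] (n : ℕ) :
    IsProbabilityMeasure (mconvN μ n) := by
  induction n with
  | zero => exact Measure.dirac.isProbabilityMeasure
  | succ n ih =>
    rw [mconvN]
    split_ifs
    · assumption
    · exact mconv_prob _ _

lemma mconv_eq (μ ν : Measure (GLd d)) : mconv μ ν = μ.mconv ν := rfl

lemma mconvN_one (μ : Measure (GLd d)) : mconvN μ 1 = μ := by simp [mconvN]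

lemma mconvN_succ (μ : Measure (GLd d)) [IsProbabilityMeasure μ] (n : ℕ) :
    mconvN μ (n + 1) = mconv (mconvN μ n) μ := by
  rw [mconvN]
  split_ifs with h
  · subst h
    rw [mconv_eq, mconvN, Measure.dirac_one_mconv]
  · rfl

lemma mconvN_add (μ : Measure (GLd d)) [IsProbabilityMeasure μ] (n m : ℕ) :
    mconvN μ (n + m) = mconv (mconvN μ n) (mconvN μ m) := by
  induction m with
  | zero => rw [add_zero, mconv_eq, mconvN, Measure.mconv_dirac_one]
  | succ m ih =>
    rw [← add_assoc, mconvN_succ, ih, mconvN_succ]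
    simp only [mconv_eq]
    rw [Measure.mconv_assoc]

lemma ae_mconv {μ ν : Measure (GLd d)} [IsProbabilityMeasure μ] [IsProbabilityMeasure ν]
    {P Q T : GLd d → Prop} (hP : ∀ᵐ g ∂μ, P g) (hQ : ∀ᵐ g ∂ν, Q g)
    (hT : MeasurableSet {g | T g}) (h : ∀ g k, P g → Q k → T (g * k)) :
    ∀ᵐ g ∂(mconv μ ν), T g := by
  unfold mconv
  rw [ae_map_iff measurable_mul.aemeasurable hT]
  have h1 : ∀ᵐ p ∂(μ.prod ν), P p.1 := Measure.quasiMeasurePreserving_fst.ae hP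
  have h2 : ∀ᵐ p ∂(μ.prod ν), Q p.2 := Measure.quasiMeasurePreserving_snd.ae hQ
  filter_upwards [h1, h2] with p hp1 hp2 using h _ _ hp1 hp2

lemma ae_mconvN {μ : Measure (GLd d)} [IsProbabilityMeasure μ]
    {T : GLd d → Prop} (hT : MeasurableSet {g | T g}) (h1 : T 1) (h : ∀ᵐ g ∂μ, T g)
    (hm : ∀ g k, T g → T k → T (g * k)) (n : ℕ) : ∀ᵐ g ∂(mconvN μ n), T g := by
  induction n with
  | zero =>
    rw [mconvN, ae_dirac_iff hT]; exact h1
  | succ n ih =>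
    rw [mconvN_succ]
    exact ae_mconv ih h hT hm

/-- Uniform size bound for the convolution powers. -/
def Bd (μ : Measure (GLd d)) (R : ℝ) : Prop :=
  0 ≤ R ∧ ∀ n : ℕ, ∀ᵐ g ∂(mconvN μ n), ell g ≤ n * R

lemma exists_Bd (hd : 0 < d) (S : Set (GLd d)) (hS : IsCompact S)
    (μ : Measure (GLd d)) [IsProbabilityMeasure μ] (hμS : μ Sᶜ = 0) : ∃ R, Bd μ R := by
  obtain ⟨C, hC⟩ := (hS.image (continuous_ell hd)).bddAbove
  have hC' : ∀ g ∈ S, ell g ≤ C := fun g hg => hC ⟨g, hg, rfl⟩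
  have hae : ∀ᵐ g ∂μ, ell g ≤ max C 0 := by
    have : ∀ᵐ g ∂μ, g ∈ S := hμS
    filter_upwards [this] with g hg using (hC' g hg).trans (le_max_left _ _)
  refine ⟨max C 0, le_max_right _ _, fun n => ?_⟩
  induction n with
  | zero =>
    rw [mconvN, ae_dirac_iff (measurableSet_le (continuous_ell hd).measurable measurable_const)]
    simp [ell_one hd]
  | succ n ih =>
    rw [mconvN_succ]
    refine ae_mconv ih hae
      (measurableSet_le (continuous_ell hd).measurable measurable_const) ?_
    intro g k hg hk
    have := ell_mul_le hd g k
    push_cast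
    linarith

section conv
variable {μ : Measure (GLd d)} [IsProbabilityMeasure μ]

lemma integrable_bd {n : ℕ} {f : GLd d → ℝ} (hf : Measurable f) {C : ℝ}
    (hC : ∀ᵐ g ∂(mconvN μ n), |f g| ≤ C) : Integrable f (mconvN μ n) :=
  Integrable.of_bound hf.aestronglyMeasurable C hC

lemma integrable_prod_conv {n m : ℕ} {f : GLd d → ℝ} (hf : Integrable f (mconvN μ (n + m))) :
    Integrable (fun p : GLd d × GLd d => f (p.1 * p.2)) ((mconvN μ n).prod (mconvN μ m)) := by
  rw [mconvN_add, mconv] at hf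
  exact (integrable_map_measure hf.1 measurable_mul.aemeasurable).1 hf

lemma integral_conv {n m : ℕ} {f : GLd d → ℝ} (hf : Integrable f (mconvN μ (n + m))) :
    ∫ g, f g ∂(mconvN μ (n + m)) = ∫ g, ∫ h, f (g * h) ∂(mconvN μ m) ∂(mconvN μ n) := by
  have h1 := integrable_prod_conv hf
  rw [← integral_prod _ h1]
  rw [mconvN_add, mconv] at hf ⊢
  rw [integral_map measurable_mul.aemeasurable hf.1]

lemma integral_conv_symm {n m : ℕ} {f : GLd d → ℝ} (hf : Integrable f (mconvN μ (n + m))) :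
    ∫ g, f g ∂(mconvN μ (n + m)) = ∫ h, ∫ g, f (g * h) ∂(mconvN μ n) ∂(mconvN μ m) := by
  have h1 := integrable_prod_conv hf
  rw [← integral_prod_symm _ h1]
  rw [mconvN_add, mconv] at hf ⊢
  rw [integral_map measurable_mul.aemeasurable hf.1]

lemma integrable_conv_left {n m : ℕ} {f : GLd d → ℝ} (hf : Integrable f (mconvN μ (n + m))) :
    Integrable (fun g => ∫ h, f (g * h) ∂(mconvN μ m)) (mconvN μ n) :=
  (integrable_prod_conv hf).integral_prod_left

lemma integrable_conv_right {n m : ℕ} {f : GLd d → ℝ} (hf : Integrable f (mconvN μ (n + m))) :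
    Integrable (fun h => ∫ g, f (g * h) ∂(mconvN μ n)) (mconvN μ m) :=
  (integrable_prod_conv hf).integral_prod_right

end conv
lemma exp_moment {Ω : Type*} [MeasurableSpace Ω] (ξ : Measure Ω) [IsProbabilityMeasure ξ]
    {Z : Ω → ℝ} (hZ : AEStronglyMeasurable Z ξ) {M c t : ℝ} (hM : ∀ᵐ ω ∂ξ, |Z ω| ≤ M)
    (hc : ∫ ω, Z ω ∂ξ ≤ -c) (ht : 0 ≤ t) (htM : t * M ≤ 1) :
    ∫ ω, Real.exp (t * Z ω) ∂ξ ≤ 1 - t * c + t ^ 2 * M ^ 2 := by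
  have hIntg : Integrable Z ξ := Integrable.of_bound hZ M hM
  have h1 : ∀ᵐ ω ∂ξ, Real.exp (t * Z ω) ≤ 1 + t * Z ω + t ^ 2 * M ^ 2 := by
    filter_upwards [hM] with ω hω
    have h2 : |t * Z ω| ≤ t * M := by
      rw [abs_mul, abs_of_nonneg ht]
      exact mul_le_mul_of_nonneg_left hω ht
    have h3 := Real.abs_exp_sub_one_sub_id_le (h2.trans htM)
    have h4 := (abs_le.1 h3).2
    have h5 : (t * Z ω) ^ 2 ≤ (t * M) ^ 2 := sq_le_sq' (by linarith [(abs_le.1 h2).1]) (abs_le.1 h2).2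
    nlinarith
  have hi2 : Integrable (fun ω => 1 + t * Z ω + t ^ 2 * M ^ 2) ξ :=
    ((integrable_const _).add (hIntg.const_mul t)).add (integrable_const _)
  have hi1 : Integrable (fun ω => 1 + t * Z ω) ξ := (integrable_const _).add (hIntg.const_mul t)
  have h0 : 0 ≤ᵐ[ξ] (fun ω => Real.exp (t * Z ω)) :=
    Filter.Eventually.of_forall fun ω => (Real.exp_pos _).le
  refine (integral_mono_of_nonneg h0 hi2 h1).trans ?_
  rw [integral_add hi1 (integrable_const _),
    integral_add (integrable_const _) (hIntg.const_mul t), integral_const_mul]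
  simp only [integral_const, probReal_univ, smul_eq_mul, one_mul]
  nlinarith [mul_le_mul_of_nonneg_left hc ht]

lemma tendsto_conv {μ : Measure (GLd d)} [IsProbabilityMeasure μ] {R : ℝ}
    (hB : Bd μ R) {F : GLd d → ℝ} (hF : Measurable F) (hb : ∀ g, |F g| ≤ 2 * ell g)
    {T : GLd d → Prop} (hT : ∀ n, ∀ᵐ g ∂(mconvN μ n), T g)
    (hsub : ∀ g h, T g → T h → F (g * h) ≤ F g + F h) :
    ∃ L, Tendsto (fun n : ℕ => (n : ℝ)⁻¹ * ∫ g, F g ∂(mconvN μ n)) atTop (nhds L) := by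
  have hbd : ∀ n : ℕ, ∀ᵐ g ∂(mconvN μ n), |F g| ≤ 2 * (n * R) := by
    intro n
    filter_upwards [hB.2 n] with g hg
    linarith [hb g]
  have hIntg : ∀ n : ℕ, Integrable F (mconvN μ n) := fun n => integrable_bd hF (hbd n)
  set u : ℕ → ℝ := fun n => ∫ g, F g ∂(mconvN μ n) with hu
  have hsa : Subadditive u := by
    intro n m
    have hp := integrable_prod_conv (hIntg (n + m))
    have h1 : Integrable (fun p : GLd d × GLd d => F p.1) ((mconvN μ n).prod (mconvN μ m)) :=
      (hIntg n).comp_fst _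
    have h2 : Integrable (fun p : GLd d × GLd d => F p.2) ((mconvN μ n).prod (mconvN μ m)) :=
      (hIntg m).comp_snd _
    have e : u (n + m) = ∫ p, F (p.1 * p.2) ∂((mconvN μ n).prod (mconvN μ m)) := by
      rw [hu]
      simp only
      rw [integral_conv (hIntg (n + m)), integral_prod _ hp]
    rw [e]
    have hle : ∫ p, F (p.1 * p.2) ∂((mconvN μ n).prod (mconvN μ m)) ≤
        ∫ p, (F p.1 + F p.2) ∂((mconvN μ n).prod (mconvN μ m)) := by
      refine integral_mono_ae hp (h1.add h2) ?_
      have a1 : ∀ᵐ p ∂((mconvN μ n).prod (mconvN μ m)), T p.1 :=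
        Measure.quasiMeasurePreserving_fst.ae (hT n)
      have a2 : ∀ᵐ p ∂((mconvN μ n).prod (mconvN μ m)), T p.2 :=
        Measure.quasiMeasurePreserving_snd.ae (hT m)
      filter_upwards [a1, a2] with p p1 p2 using hsub _ _ p1 p2
    refine hle.trans ?_
    rw [integral_add h1 h2, integral_fun_fst, integral_fun_snd]
    simp [hu]
  have hbb : BddBelow (Set.range fun n => u n / n) := by
    refine ⟨-(2 * R), ?_⟩
    rintro _ ⟨n, rfl⟩
    rcases Nat.eq_zero_or_pos n with rfl | hn
    · simp [hB.1]
    · have hn' : (0 : ℝ) < n := by exact_mod_cast hn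
      simp only
      rw [le_div_iff₀ hn']
      have := norm_integral_le_of_norm_le_const (μ := mconvN μ n) (f := F) (C := 2 * (n * R)) (hbd n)
      simp only [probReal_univ, mul_one, Real.norm_eq_abs] at this
      have := (abs_le.1 this).1
      simp only [hu]
      linarith
  refine ⟨hsa.lim, ?_⟩
  have := hsa.tendsto_lim hbb
  refine this.congr (fun n => ?_)
  rw [div_eq_inv_mul]

lemma L1_tendsto (hd : 0 < d) {μ : Measure (GLd d)} [IsProbabilityMeasure μ] {R : ℝ}
    (hB : Bd μ R) :
    Tendsto (fun n : ℕ => (n : ℝ)⁻¹ * ∫ g, Real.log (gnorm g) ∂(mconvN μ n)) atTop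
      (nhds (L1 μ)) := by
  refine tendsto_nhds_limUnder ?_
  refine tendsto_conv (T := fun _ => True) hB
    (continuous_gnorm.log (fun g => (gnorm_pos hd g).ne')).measurable ?_
    (fun n => Filter.Eventually.of_forall fun _ => trivial)
    (fun g h _ _ => log_gnorm_mul_le hd g h)
  intro g
  have h1 : Real.log (gnorm g) ≤ ell g := le_max_left _ _
  have h2 : Real.log (gnorm g⁻¹) ≤ ell g := le_max_right _ _
  have h3 := ell_nonneg hd g
  have h4 := log_gnorm_mul_le hd g g⁻¹
  have h5 : Real.log (gnorm (1 : GLd d)) = 0 := by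
    have := ell_one hd
    simpa [ell] using this
  rw [mul_inv_cancel, h5] at h4
  rw [abs_le]; constructor <;> linarith

/-- Area of the parallelogram spanned by two vectors. -/
def area (x y : Ed d) : ℝ := Real.sqrt (‖x‖ ^ 2 * ‖y‖ ^ 2 - (inner ℝ x y : ℝ) ^ 2)

lemma area_comb (x w : Ed d) (a s : ℝ) : area x (a • x + s • w) = |s| * area x w := by
  unfold area
  rw [← Real.sqrt_sq_eq_abs, ← Real.sqrt_mul (sq_nonneg s)]
  congr 1
  rw [← real_inner_self_eq_norm_sq, ← real_inner_self_eq_norm_sq, ← real_inner_self_eq_norm_sq]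
  simp only [inner_add_left, inner_add_right, inner_smul_left, inner_smul_right]
  rw [real_inner_comm x w]
  simp
  ring

lemma area_smul_left (x w : Ed d) (s : ℝ) : area (s • x) w = |s| * area x w := by
  unfold area
  rw [← Real.sqrt_sq_eq_abs, ← Real.sqrt_mul (sq_nonneg s)]
  congr 1
  rw [norm_smul, inner_smul_left]
  simp [mul_pow]
  ring

lemma area_smul_right (x w : Ed d) (s : ℝ) : area x (s • w) = |s| * area x w := by
  have := area_comb x w 0 s
  simpa using this

lemma area_nonneg (x y : Ed d) : 0 ≤ area x y := Real.sqrt_nonneg _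

lemma area_le (x y : Ed d) : area x y ≤ ‖x‖ * ‖y‖ := by
  unfold area
  rw [Real.sqrt_le_left (by positivity)]
  nlinarith [sq_nonneg (inner ℝ x y : ℝ)]

lemma area_bddAbove (g : GLd d) : BddAbove { x | ∃ p q : Ed d, ‖p‖ = 1 ∧ ‖q‖ = 1 ∧
    (inner ℝ p q : ℝ) = 0 ∧
    x = Real.sqrt (‖glCLM g p‖ ^ 2 * ‖glCLM g q‖ ^ 2 -
      (inner ℝ (glCLM g p) (glCLM g q) : ℝ) ^ 2) } := by
  refine ⟨gnorm g * gnorm g, ?_⟩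
  rintro x ⟨p, q, hp, hq, -, rfl⟩
  refine (area_le _ _).trans ?_
  have h1 := (glCLM g).le_opNorm p
  have h2 := (glCLM g).le_opNorm q
  rw [hp, mul_one] at h1
  rw [hq, mul_one] at h2
  exact mul_le_mul h1 h2 (norm_nonneg _) (norm_nonneg _)

lemma area_le_N2 (g : GLd d) {p q : Ed d} (hp : ‖p‖ = 1) (hq : ‖q‖ = 1)
    (hpq : (inner ℝ p q : ℝ) = 0) : area (glCLM g p) (glCLM g q) ≤ N2 g :=
  le_csSup (area_bddAbove g) ⟨p, q, hp, hq, hpq, rfl⟩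

lemma N2_nonneg (g : GLd d) : 0 ≤ N2 g := by
  apply Real.sSup_nonneg
  rintro x ⟨p, q, -, -, -, rfl⟩
  exact Real.sqrt_nonneg _

lemma area_map_le (g : GLd d) (x y : Ed d) :
    area (glCLM g x) (glCLM g y) ≤ N2 g * area x y := by
  by_cases hx : x = 0
  · subst hx
    have : area (0 : Ed d) (glCLM g y) = 0 := by simp [area]
    rw [map_zero, this]
    exact mul_nonneg (N2_nonneg g) (area_nonneg _ _)
  have hx' : ‖x‖ ≠ 0 := norm_ne_zero_iff.2 hx
  set a : ℝ := inner ℝ x y / ‖x‖ ^ 2 with ha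
  set w : Ed d := y - a • x with hw
  have hy : y = a • x + (1 : ℝ) • w := by rw [hw]; simp
  have hxw : (inner ℝ x w : ℝ) = 0 := by
    rw [hw, inner_sub_right, inner_smul_right, real_inner_self_eq_norm_sq, ha]
    field_simp
    ring
  have e1 : area x y = area x w := by
    conv_lhs => rw [hy]
    rw [area_comb]; simp
  have e2 : area (glCLM g x) (glCLM g y) = area (glCLM g x) (glCLM g w) := by
    conv_lhs => rw [hy]
    rw [map_add, map_smul, map_smul, area_comb]; simp
  rw [e1, e2]
  by_cases hw0 : w = 0
  · rw [hw0]
    have : area (glCLM g x) (0 : Ed d) = 0 := by simp [area]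
    rw [map_zero, this]
    exact mul_nonneg (N2_nonneg g) (area_nonneg _ _)
  have hw' : ‖w‖ ≠ 0 := norm_ne_zero_iff.2 hw0
  have ex : x = ‖x‖ • (‖x‖⁻¹ • x) := by rw [smul_smul, mul_inv_cancel₀ hx', one_smul]
  have ew : w = ‖w‖ • (‖w‖⁻¹ • w) := by rw [smul_smul, mul_inv_cancel₀ hw', one_smul]
  have h1 := area_le_N2 g (p := ‖x‖⁻¹ • x) (q := ‖w‖⁻¹ • w)
    (by rw [norm_smul, norm_inv, norm_norm, inv_mul_cancel₀ hx'])
    (by rw [norm_smul, norm_inv, norm_norm, inv_mul_cancel₀ hw'])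
    (by rw [inner_smul_left, inner_smul_right, hxw]; simp)
  have h2 : area x w = ‖x‖ * ‖w‖ := by
    unfold area
    rw [hxw]
    rw [show ‖x‖ ^ 2 * ‖w‖ ^ 2 - 0 ^ 2 = (‖x‖ * ‖w‖) ^ 2 by ring]
    exact Real.sqrt_sq (by positivity)
  rw [h2]
  rw [map_smul, map_smul, area_smul_left, area_smul_right, abs_of_nonneg (by positivity),
    abs_of_nonneg (by positivity)] at h1
  have hxp : 0 < ‖x‖ := norm_pos_iff.2 hx
  have hwp : 0 < ‖w‖ := norm_pos_iff.2 hw0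
  have h3 := mul_le_mul_of_nonneg_left h1 (mul_pos hxp hwp).le
  calc area (glCLM g x) (glCLM g w)
      = ‖x‖ * ‖w‖ * (‖x‖⁻¹ * (‖w‖⁻¹ * area (glCLM g x) (glCLM g w))) := by field_simp
    _ ≤ ‖x‖ * ‖w‖ * N2 g := h3
    _ = _ := by ring

lemma exists_orthonormal_pair (hd : 2 ≤ d) : ∃ p q : Ed d, ‖p‖ = 1 ∧ ‖q‖ = 1 ∧
    (inner ℝ p q : ℝ) = 0 := by
  refine ⟨EuclideanSpace.single ⟨0, by omega⟩ 1, EuclideanSpace.single ⟨1, by omega⟩ 1, ?_, ?_, ?_⟩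
  · simp
  · simp
  · rw [EuclideanSpace.inner_single_left]; simp

lemma N2_le (g : GLd d) : N2 g ≤ gnorm g * gnorm g := by
  apply Real.sSup_le
  · rintro x ⟨p, q, hp, hq, -, rfl⟩
    refine (area_le _ _).trans ?_
    have h1 := (glCLM g).le_opNorm p
    have h2 := (glCLM g).le_opNorm q
    rw [hp, mul_one] at h1
    rw [hq, mul_one] at h2
    exact mul_le_mul h1 h2 (norm_nonneg _) (norm_nonneg _)
  · exact mul_self_nonneg _

lemma N2_mul_inv (hd : 2 ≤ d) (g : GLd d) : 1 ≤ N2 g⁻¹ * N2 g := by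
  obtain ⟨p, q, hp, hq, hpq⟩ := exists_orthonormal_pair hd
  have h1 := area_map_le g⁻¹ (glCLM g p) (glCLM g q)
  rw [glCLM_leftInv, glCLM_leftInv] at h1
  have h2 : area p q = 1 := by simp [area, hp, hq, hpq]
  rw [h2] at h1
  exact h1.trans (mul_le_mul_of_nonneg_left (area_le_N2 g hp hq hpq) (N2_nonneg _))

lemma N2_pos (hd : 2 ≤ d) (g : GLd d) : 0 < N2 g := by
  rcases (N2_nonneg g).lt_or_eq with h | h
  · exact h
  · have := N2_mul_inv hd g
    rw [← h] at this
    norm_num at this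

lemma N2_mul_le (g h : GLd d) : N2 (g * h) ≤ N2 g * N2 h := by
  apply Real.sSup_le
  · rintro x ⟨p, q, hp, hq, hpq, rfl⟩
    have := area_map_le g (glCLM h p) (glCLM h q)
    rw [← glCLM_mul_apply, ← glCLM_mul_apply] at this
    exact this.trans (mul_le_mul_of_nonneg_left (area_le_N2 h hp hq hpq) (N2_nonneg _))
  · exact mul_nonneg (N2_nonneg _) (N2_nonneg _)

lemma log_N2_le (hd : 2 ≤ d) (g : GLd d) : Real.log (N2 g) ≤ 2 * Real.log (gnorm g) := by
  have h := Real.log_le_log (N2_pos hd g) (N2_le g)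
  have hg := (gnorm_pos (by omega) g).ne'
  rw [Real.log_mul hg hg] at h
  linarith

lemma abs_log_N2 (hd : 2 ≤ d) (g : GLd d) : |Real.log (N2 g)| ≤ 2 * ell g := by
  have h1 : Real.log (gnorm g) ≤ ell g := le_max_left _ _
  have h2 : Real.log (gnorm g⁻¹) ≤ ell g := le_max_right _ _
  have h3 := log_N2_le hd g
  have h4 := log_N2_le hd g⁻¹
  have h5 := Real.log_le_log one_pos (N2_mul_inv hd g)
  rw [Real.log_mul (N2_pos hd _).ne' (N2_pos hd _).ne', Real.log_one] at h5
  rw [abs_le]; constructor <;> linarith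

lemma continuous_area : Continuous (fun p : Ed d × Ed d => area p.1 p.2) := by
  unfold area
  fun_prop

lemma continuous_glCLM_apply : Continuous (fun p : GLd d × Ed d => glCLM p.1 p.2) :=
  (continuous_glCLM.comp continuous_fst).clm_apply continuous_snd

lemma measurable_N2 : Measurable (N2 : GLd d → ℝ) := by
  have h : (N2 : GLd d → ℝ) = fun g => ⨆ i : {r : Ed d × Ed d // ‖r.1‖ = 1 ∧ ‖r.2‖ = 1 ∧
      (inner ℝ r.1 r.2 : ℝ) = 0}, area (glCLM g i.1.1) (glCLM g i.1.2) := by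
    funext g
    unfold N2 iSup
    congr 1
    ext x
    constructor
    · rintro ⟨p, q, hp, hq, hpq, rfl⟩
      exact ⟨⟨(p, q), hp, hq, hpq⟩, rfl⟩
    · rintro ⟨⟨⟨p, q⟩, hp, hq, hpq⟩, rfl⟩
      exact ⟨p, q, hp, hq, hpq, rfl⟩
  rw [h]
  apply LowerSemicontinuous.measurable
  apply lowerSemicontinuous_ciSup
  · intro g
    refine ⟨N2 g, ?_⟩
    rintro _ ⟨⟨⟨p, q⟩, hp, hq, hpq⟩, rfl⟩
    exact area_le_N2 g hp hq hpq
  · intro i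
    apply Continuous.lowerSemicontinuous
    have h1 : Continuous (fun g : GLd d => glCLM g i.1.1) :=
      continuous_glCLM.clm_apply continuous_const
    have h2 : Continuous (fun g : GLd d => glCLM g i.1.2) :=
      continuous_glCLM.clm_apply continuous_const
    have h3 := continuous_area.comp (h1.prodMk h2)
    exact h3

lemma L12_tendsto (hd : 2 ≤ d) {μ : Measure (GLd d)} [IsProbabilityMeasure μ] {R : ℝ}
    (hB : Bd μ R) :
    Tendsto (fun n : ℕ => (n : ℝ)⁻¹ * ∫ g, Real.log (N2 g) ∂(mconvN μ n)) atTop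
      (nhds (L12 μ)) := by
  refine tendsto_nhds_limUnder ?_
  refine tendsto_conv (T := fun _ => True) hB measurable_N2.log (abs_log_N2 hd)
    (fun n => Filter.Eventually.of_forall fun _ => trivial) (fun g h _ _ => ?_)
  rw [← Real.log_mul (N2_pos hd g).ne' (N2_pos hd h).ne']
  exact Real.log_le_log (N2_pos hd _) (N2_mul_le g h)

/-- Norm of the restriction to a subspace. -/
def rnorm (V : Submodule ℝ (Ed d)) (g : GLd d) : ℝ :=
  ‖LinearMap.toContinuousLinearMap ((glCLM g).toLinearMap.domRestrict V)‖

lemma rnorm_eq (V : Submodule ℝ (Ed d)) (g : GLd d) :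
    rnorm V g = ‖(glCLM g).comp V.subtypeL‖ := by
  unfold rnorm
  congr 1

lemma le_rnorm (V : Submodule ℝ (Ed d)) (g : GLd d) {v : Ed d} (hv : v ∈ V) :
    ‖glCLM g v‖ ≤ rnorm V g * ‖v‖ := by
  rw [rnorm_eq]
  exact ((glCLM g).comp V.subtypeL).le_opNorm ⟨v, hv⟩

lemma rnorm_le (V : Submodule ℝ (Ed d)) (g : GLd d) {C : ℝ} (hC : 0 ≤ C)
    (h : ∀ v ∈ V, ‖glCLM g v‖ ≤ C * ‖v‖) : rnorm V g ≤ C := by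
  rw [rnorm_eq]
  exact ContinuousLinearMap.opNorm_le_bound _ hC (fun v => h v.1 v.2)

lemma continuous_rnorm (V : Submodule ℝ (Ed d)) : Continuous (rnorm V) := by
  have : rnorm V = fun g => ‖(glCLM g).comp V.subtypeL‖ := funext (rnorm_eq V)
  rw [this]
  exact (continuous_glCLM.clm_comp continuous_const).norm

lemma rnorm_nonneg (V : Submodule ℝ (Ed d)) (g : GLd d) : 0 ≤ rnorm V g := by
  rw [rnorm_eq]; exact norm_nonneg ((glCLM g).comp V.subtypeL)

lemma rnorm_pos {V : Submodule ℝ (Ed d)} (hV : V ≠ ⊥) (g : GLd d) : 0 < rnorm V g := by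
  obtain ⟨v, hv, hv0⟩ := V.exists_mem_ne_zero_of_ne_bot hV
  have h1 := le_rnorm V g hv
  have h2 : 0 < ‖glCLM g v‖ := norm_pos_iff.2 (glCLM_ne_zero g hv0)
  by_contra h
  nlinarith [norm_nonneg v]

lemma rnorm_top (g : GLd d) : rnorm (⊤ : Submodule ℝ (Ed d)) g = gnorm g := by
  apply le_antisymm
  · exact rnorm_le _ _ (norm_nonneg _) (fun v _ => (glCLM g).le_opNorm v)
  · exact ContinuousLinearMap.opNorm_le_bound _ (rnorm_nonneg _ _)
      (fun v => le_rnorm _ g (Submodule.mem_top))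

lemma abs_log_rnorm (hd : 0 < d) {V : Submodule ℝ (Ed d)} (hV : V ≠ ⊥) (g : GLd d) :
    |Real.log (rnorm V g)| ≤ ell g := by
  obtain ⟨v, hv, hv0⟩ := V.exists_mem_ne_zero_of_ne_bot hV
  have h1 : Real.log (gnorm g) ≤ ell g := le_max_left _ _
  have h2 : rnorm V g ≤ gnorm g :=
    rnorm_le _ _ (norm_nonneg _) (fun v _ => (glCLM g).le_opNorm v)
  have h3 := Real.log_le_log (rnorm_pos hV g) h2
  have h4 := Real.log_le_log (norm_pos_iff.2 (glCLM_ne_zero g hv0)) (le_rnorm V g hv)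
  rw [Real.log_mul (rnorm_pos hV g).ne' (norm_ne_zero_iff.2 hv0)] at h4
  have h5 := (abs_le.1 (abs_log_norm_apply hd g hv0)).1
  rw [abs_le]; constructor <;> linarith

lemma measurableSet_stab (V : Submodule ℝ (Ed d)) :
    MeasurableSet {g : GLd d | ∀ v ∈ V, glCLM g v ∈ V} := by
  apply IsClosed.measurableSet
  have : {g : GLd d | ∀ v ∈ V, glCLM g v ∈ V} = ⋂ v ∈ V, {g : GLd d | glCLM g v ∈ V} := by
    ext g; simp
  rw [this]
  refine isClosed_biInter (fun v _ => ?_)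
  exact (V.closed_of_finiteDimensional).preimage (continuous_glCLM.clm_apply continuous_const)

lemma L1rest_tendsto (hd : 0 < d) {μ : Measure (GLd d)} [IsProbabilityMeasure μ] {R : ℝ}
    (hB : Bd μ R) {V : Submodule ℝ (Ed d)} (hV : V ≠ ⊥)
    (hinv : ∀ᵐ g ∂μ, ∀ v ∈ V, glCLM g v ∈ V) :
    Tendsto (fun n : ℕ => (n : ℝ)⁻¹ * ∫ g, Real.log (rnorm V g) ∂(mconvN μ n)) atTop
      (nhds (L1rest μ V)) := by
  refine tendsto_nhds_limUnder ?_
  refine tendsto_conv (F := fun g => Real.log (rnorm V g))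
    (T := fun g => ∀ v ∈ V, glCLM g v ∈ V) hB
    ((continuous_rnorm V).log (fun g => (rnorm_pos hV g).ne')).measurable ?_ ?_ ?_
  · intro g
    have := abs_log_rnorm hd hV g
    linarith [ell_nonneg hd g]
  · refine ae_mconvN (measurableSet_stab V) ?_ hinv ?_
    · intro v hv; rw [glCLM_one]; exact hv
    · intro g k hg hk v hv
      rw [glCLM_mul_apply]; exact hg _ (hk _ hv)
  · intro g h hg hh
    rw [← Real.log_mul (rnorm_pos hV g).ne' (rnorm_pos hV h).ne']
    refine Real.log_le_log (rnorm_pos hV _) ?_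
    refine rnorm_le _ _ (mul_nonneg (rnorm_nonneg _ _) (rnorm_nonneg _ _)) ?_
    intro v hv
    rw [glCLM_mul_apply, mul_assoc]
    exact (le_rnorm V g (hh v hv)).trans
      (mul_le_mul_of_nonneg_left (le_rnorm V h hv) (rnorm_nonneg _ _))
/-- The unit sphere. -/
abbrev Sd (d : ℕ) := Metric.sphere (0 : Ed d) 1

lemma Sd_norm (v : Sd d) : ‖(v : Ed d)‖ = 1 := by
  have := v.2
  rwa [mem_sphere_zero_iff_norm] at this

lemma Sd_ne (v : Sd d) : (v : Ed d) ≠ 0 := by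
  intro h
  have := Sd_norm v
  rw [h, norm_zero] at this
  norm_num at this

/-- Normalised action on the sphere. -/
def sact (g : GLd d) (v : Sd d) : Sd d :=
  ⟨‖glCLM g v‖⁻¹ • glCLM g v, by
    rw [mem_sphere_zero_iff_norm, norm_smul, norm_inv, norm_norm]
    exact inv_mul_cancel₀ (norm_ne_zero_iff.2 (glCLM_ne_zero g (Sd_ne v)))⟩

lemma sact_coe (g : GLd d) (v : Sd d) :
    (sact g v : Ed d) = ‖glCLM g v‖⁻¹ • glCLM g (v : Ed d) := rfl

lemma continuous_sact : Continuous (fun p : GLd d × Sd d => sact p.1 p.2) := by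
  have h0 : Continuous (fun p : GLd d × Sd d => (p.1, (p.2 : Ed d))) :=
    continuous_fst.prodMk (continuous_subtype_val.comp continuous_snd)
  have h1 : Continuous (fun p : GLd d × Sd d => glCLM p.1 (p.2 : Ed d)) := by
    have h := continuous_glCLM_apply.comp h0
    exact h
  refine Continuous.subtype_mk ?_ _
  exact (h1.norm.inv₀ (fun p => norm_ne_zero_iff.2 (glCLM_ne_zero _ (Sd_ne _)))).smul h1

lemma sact_mul (g h : GLd d) (v : Sd d) : sact (g * h) v = sact g (sact h v) := by
  apply Subtype.ext
  have hh : ‖glCLM h (v : Ed d)‖ ≠ 0 := norm_ne_zero_iff.2 (glCLM_ne_zero h (Sd_ne v))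
  rw [sact_coe, sact_coe, sact_coe, glCLM_mul_apply, map_smul, norm_smul, norm_inv, norm_norm,
    smul_smul]
  congr 1
  field_simp

lemma sact_one (v : Sd d) : sact 1 v = v := by
  apply Subtype.ext
  rw [sact_coe, glCLM_one]
  simp

/-- The norm cocycle. -/
def sig (g : GLd d) (v : Sd d) : ℝ := Real.log ‖glCLM g v‖

lemma continuous_sig : Continuous (fun p : GLd d × Sd d => sig p.1 p.2) := by
  have h0 : Continuous (fun p : GLd d × Sd d => (p.1, (p.2 : Ed d))) :=
    continuous_fst.prodMk (continuous_subtype_val.comp continuous_snd)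
  have h1 : Continuous (fun p : GLd d × Sd d => glCLM p.1 (p.2 : Ed d)) := by
    have h := continuous_glCLM_apply.comp h0
    exact h
  exact h1.norm.log (fun p => norm_ne_zero_iff.2 (glCLM_ne_zero _ (Sd_ne _)))

lemma sig_mul (g h : GLd d) (v : Sd d) : sig (g * h) v = sig g (sact h v) + sig h v := by
  have hh : ‖glCLM h (v : Ed d)‖ ≠ 0 := norm_ne_zero_iff.2 (glCLM_ne_zero h (Sd_ne v))
  have hg : ‖glCLM g (sact h v : Ed d)‖ ≠ 0 := norm_ne_zero_iff.2 (glCLM_ne_zero g (Sd_ne _))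
  unfold sig
  rw [← Real.log_mul hg hh, glCLM_mul_apply, sact_coe, map_smul, norm_smul, norm_inv, norm_norm]
  congr 1
  field_simp

lemma abs_sig_le (hd : 0 < d) (g : GLd d) (v : Sd d) : |sig g v| ≤ ell g := by
  have := abs_log_norm_apply hd g (Sd_ne v)
  rw [Sd_norm, Real.log_one, sub_zero] at this
  exact this

/-- Expected growth. -/
def cn (μ : Measure (GLd d)) (n : ℕ) (v : Sd d) : ℝ := ∫ g, sig g v ∂(mconvN μ n)

section sphere
variable {μ : Measure (GLd d)} [IsProbabilityMeasure μ] {R : ℝ}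

lemma sact_cont_left (v : Sd d) : Continuous (fun g : GLd d => sact g v) := by
  have h := continuous_sact.comp ((continuous_id (X := GLd d)).prodMk (continuous_const (y := v)))
  exact h

lemma sig_cont_left (v : Sd d) : Continuous (fun g : GLd d => sig g v) := by
  have h := continuous_sig.comp ((continuous_id (X := GLd d)).prodMk (continuous_const (y := v)))
  exact h

lemma sact_cont_right (g : GLd d) : Continuous (fun v : Sd d => sact g v) := by
  have h := continuous_sact.comp ((continuous_const (y := g)).prodMk (continuous_id (X := Sd d)))
  exact h

lemma sig_cont_right (g : GLd d) : Continuous (fun v : Sd d => sig g v) := by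
  have h := continuous_sig.comp ((continuous_const (y := g)).prodMk (continuous_id (X := Sd d)))
  exact h

lemma ae_sig (hd : 0 < d) (hB : Bd μ R) (n : ℕ) (v : Sd d) :
    ∀ᵐ g ∂(mconvN μ n), |sig g v| ≤ n * R := by
  filter_upwards [hB.2 n] with g hg using (abs_sig_le hd g v).trans hg

lemma integrable_sig (hd : 0 < d) (hB : Bd μ R) (n : ℕ) (v : Sd d) :
    Integrable (fun g => sig g v) (mconvN μ n) :=
  integrable_bd (sig_cont_left v).measurable (ae_sig hd hB n v)

lemma continuous_cn (hd : 0 < d) (hB : Bd μ R) (n : ℕ) : Continuous (cn μ n) := by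
  unfold cn
  refine continuous_of_dominated (bound := fun _ => n * R) ?_ ?_ (integrable_const _) ?_
  · exact fun v => (sig_cont_left v).aestronglyMeasurable
  · exact fun v => ae_sig hd hB n v
  · exact Filter.Eventually.of_forall fun g => sig_cont_right g

lemma abs_cn_le (hd : 0 < d) (hB : Bd μ R) (n : ℕ) (v : Sd d) : |cn μ n v| ≤ n * R := by
  have := norm_integral_le_of_norm_le_const (μ := mconvN μ n) (f := fun g => sig g v)
    (C := n * R) (ae_sig hd hB n v)
  unfold cn
  simpa using this

lemma bdd_of_cont {f : Sd d → ℝ} (hf : Continuous f) : ∃ C, ∀ v, |f v| ≤ C := by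
  obtain ⟨C, hC⟩ := (isCompact_range hf.abs).bddAbove
  exact ⟨C, fun v => hC ⟨v, rfl⟩⟩

lemma integrable_sact (n : ℕ) {f : Sd d → ℝ} (hf : Continuous f) (v : Sd d) :
    Integrable (fun g => f (sact g v)) (mconvN μ n) := by
  obtain ⟨C, hC⟩ := bdd_of_cont hf
  exact integrable_bd (C := C) (hf.comp (sact_cont_left v)).measurable
    (Filter.Eventually.of_forall fun g => hC _)

lemma cn_add (hd : 0 < d) (hB : Bd μ R) (n m : ℕ) (v : Sd d) :
    cn μ (n + m) v = (∫ h, cn μ n (sact h v) ∂(mconvN μ m)) + cn μ m v := by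
  unfold cn
  rw [integral_conv_symm (integrable_sig hd hB (n + m) v)]
  have h1 : ∀ h : GLd d, ∫ g, sig (g * h) v ∂(mconvN μ n) = cn μ n (sact h v) + sig h v := by
    intro h
    simp only [sig_mul]
    rw [integral_add (integrable_sig hd hB n _) (integrable_const _)]
    simp [cn]
  simp only [h1]
  rw [integral_add (integrable_sact m (continuous_cn hd hB n) v) (integrable_sig hd hB m v)]
  rfl

lemma exists_beta (hd : 0 < d) (hB : Bd μ R) :
    ∃ β : ℝ, (∀ ε > 0, ∀ᶠ n : ℕ in atTop, ∀ v, n * (β - ε) ≤ cn μ n v) ∧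
      ∃ v : ℕ → Sd d, Tendsto (fun n : ℕ => cn μ n (v n) / n) atTop (nhds β) := by
  have : Nonempty (Fin d) := ⟨⟨0, hd⟩⟩
  have : Nontrivial (Ed d) := inferInstance
  have hne : Nonempty (Sd d) := (NormedSpace.sphere_nonempty.2 zero_le_one).to_subtype
  have hmin : ∀ n, ∃ v : Sd d, ∀ w, cn μ n v ≤ cn μ n w := by
    intro n
    obtain ⟨v, -, hv⟩ := isCompact_univ.exists_isMinOn (Set.univ_nonempty (α := Sd d))
      (continuous_cn hd hB n).continuousOn
    exact ⟨v, fun w => hv (Set.mem_univ w)⟩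
  choose v hv using hmin
  have hsa : Subadditive (fun n => -cn μ n (v n)) := by
    intro n m
    have h1 := cn_add hd hB n m (v (n + m))
    have h2 : cn μ n (v n) ≤ ∫ h, cn μ n (sact h (v (n + m))) ∂(mconvN μ m) := by
      have := integral_mono (integrable_const (cn μ n (v n)))
        (integrable_sact (μ := μ) m (continuous_cn hd hB n) (v (n + m))) (fun h => hv n _)
      simpa using this
    have h3 := hv m (v (n + m))
    simp only
    linarith
  have hbb : BddBelow (Set.range fun n : ℕ => (-cn μ n (v n)) / n) := by
    refine ⟨-R, ?_⟩
    rintro _ ⟨n, rfl⟩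
    rcases Nat.eq_zero_or_pos n with rfl | hn
    · simp [hB.1]
    · have hn' : (0 : ℝ) < n := by exact_mod_cast hn
      simp only
      rw [le_div_iff₀ hn']
      have := (abs_le.1 (abs_cn_le hd hB n (v n))).2
      linarith
  have ht : Tendsto (fun n : ℕ => cn μ n (v n) / n) atTop (nhds (-hsa.lim)) := by
    refine (hsa.tendsto_lim hbb).neg.congr (fun n => ?_)
    ring
  refine ⟨-hsa.lim, ?_, v, ht⟩
  intro ε hε
  have h1 := ht.eventually (lt_mem_nhds (show -hsa.lim - ε < -hsa.lim by linarith))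
  filter_upwards [h1, eventually_gt_atTop 0] with n hn hn0 w
  have hn' : (0 : ℝ) < n := by exact_mod_cast hn0
  rw [lt_div_iff₀ hn'] at hn
  have := hv n w
  linarith

/-- Stationary measure on the sphere. -/
def SStat (μ : Measure (GLd d)) (η : Measure (Sd d)) : Prop :=
  ∀ f : Sd d → ℝ, Continuous f → ∫ x, f x ∂η = ∫ x, ∫ g, f (sact g x) ∂μ ∂η

/-- Empirical averages. -/
def emp (μ : Measure (GLd d)) (n : ℕ) (v : Sd d) : Measure (Sd d) :=
  ((n + 1 : ℕ) : ENNReal)⁻¹ • ∑ k ∈ Finset.range (n + 1), (mconvN μ k).map (fun g => sact g v)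

instance emp_prob (n : ℕ) (v : Sd d) : IsProbabilityMeasure (emp μ n v) := by
  constructor
  have : ∀ k, IsProbabilityMeasure ((mconvN μ k).map (fun g => sact g v)) := fun k =>
    Measure.isProbabilityMeasure_map (sact_cont_left v).aemeasurable
  unfold emp
  rw [Measure.smul_apply, Measure.finsetSum_apply]
  simp only [measure_univ, Finset.sum_const, Finset.card_range, smul_eq_mul, nsmul_eq_mul, mul_one]
  exact ENNReal.inv_mul_cancel (by simp) (ENNReal.natCast_ne_top _)

lemma integral_emp (n : ℕ) (v : Sd d) {f : Sd d → ℝ} (hf : Continuous f) :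
    ∫ x, f x ∂(emp μ n v) =
      ((n + 1 : ℕ) : ℝ)⁻¹ * ∑ k ∈ Finset.range (n + 1), ∫ g, f (sact g v) ∂(mconvN μ k) := by
  have : ∀ k, IsProbabilityMeasure ((mconvN μ k).map (fun g => sact g v)) := fun k =>
    Measure.isProbabilityMeasure_map (sact_cont_left v).aemeasurable
  obtain ⟨C, hC⟩ := bdd_of_cont hf
  unfold emp
  rw [integral_smul_measure, integral_finsetSum_measure]
  · simp only [ENNReal.toReal_inv, ENNReal.toReal_natCast, smul_eq_mul]
    congr 1
    refine Finset.sum_congr rfl (fun k _ => ?_)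
    rw [integral_map (sact_cont_left v).aemeasurable hf.aestronglyMeasurable]
  · intro k _
    exact Integrable.of_bound hf.aestronglyMeasurable C (Filter.Eventually.of_forall hC)

lemma continuous_Q {f : Sd d → ℝ} (hf : Continuous f) :
    Continuous (fun x => ∫ g, f (sact g x) ∂μ) := by
  obtain ⟨C, hC⟩ := bdd_of_cont hf
  refine continuous_of_dominated (bound := fun _ => C) ?_ ?_ (integrable_const _) ?_
  · exact fun v => (hf.comp (sact_cont_left v)).aestronglyMeasurable
  · exact fun v => Filter.Eventually.of_forall fun g => hC _
  · exact Filter.Eventually.of_forall fun g => hf.comp (sact_cont_right g)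

lemma exists_stat (hd : 0 < d) (hB : Bd μ R) {β : ℝ} {v : ℕ → Sd d}
    (hv : Tendsto (fun n : ℕ => cn μ n (v n) / n) atTop (nhds β)) :
    ∃ η : Measure (Sd d), IsProbabilityMeasure η ∧ SStat μ η ∧ ∫ x, cn μ 1 x ∂η = β := by
  let P : ℕ → ProbabilityMeasure (Sd d) := fun n => ⟨emp μ n (v (n + 1)), emp_prob _ _⟩
  obtain ⟨η, hη⟩ : ∃ η, Tendsto P (hyperfilter ℕ) (nhds η) :=
    ⟨((hyperfilter ℕ).map P).lim, Ultrafilter.le_nhds_lim _⟩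
  have hlim : ∀ f : Sd d → ℝ, Continuous f → Tendsto (fun n => ∫ x, f x ∂(emp μ n (v (n + 1))))
      (hyperfilter ℕ) (nhds (∫ x, f x ∂(η : Measure (Sd d)))) := by
    intro f hf
    have := (ProbabilityMeasure.tendsto_iff_forall_integral_tendsto.1 hη)
      (BoundedContinuousFunction.mkOfCompact ⟨f, hf⟩)
    exact this
  have hle : (hyperfilter ℕ : Filter ℕ) ≤ atTop := Nat.hyperfilter_le_atTop
  refine ⟨η, inferInstance, ?_, ?_⟩
  · intro f hf
    obtain ⟨C, hC⟩ := bdd_of_cont hf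
    have h1 := hlim f hf
    have h2 := hlim _ (continuous_Q (μ := μ) hf)
    have h3 : Tendsto (fun n : ℕ => (∫ x, (∫ g, f (sact g x) ∂μ) ∂(emp μ n (v (n + 1)))) -
        ∫ x, f x ∂(emp μ n (v (n + 1)))) atTop (nhds 0) := by
      have hb : ∀ n : ℕ, ‖(∫ x, (∫ g, f (sact g x) ∂μ) ∂(emp μ n (v (n + 1)))) -
        ∫ x, f x ∂(emp μ n (v (n + 1)))‖ ≤ (2 * C) / ((n : ℝ) + 1) := by
        intro n
        rw [integral_emp _ _ hf, integral_emp _ _ (continuous_Q hf), ← mul_sub,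
          ← Finset.sum_sub_distrib]
        have e : ∀ k, ∫ h, (∫ g, f (sact g (sact h (v (n + 1)))) ∂μ) ∂(mconvN μ k) =
            ∫ g, f (sact g (v (n + 1))) ∂(mconvN μ (k + 1)) := by
          intro k
          rw [add_comm k 1, integral_conv_symm (integrable_sact (1 + k) hf _), mconvN_one]
          simp only [sact_mul]
        simp only [e]
        rw [Finset.sum_range_sub (fun k => ∫ g, f (sact g (v (n + 1))) ∂(mconvN μ k))]
        have hbd : ∀ k, |∫ g, f (sact g (v (n + 1))) ∂(mconvN μ k)| ≤ C := by
          intro k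
          have := norm_integral_le_of_norm_le_const (μ := mconvN μ k)
            (f := fun g => f (sact g (v (n + 1)))) (C := C)
            (Filter.Eventually.of_forall fun g => hC _)
          simpa using this
        rw [norm_mul, norm_inv, div_eq_inv_mul]
        have hn : ‖((n + 1 : ℕ) : ℝ)‖ = (n : ℝ) + 1 := by
          rw [Real.norm_of_nonneg (by positivity)]; push_cast; ring
        rw [hn]
        refine mul_le_mul_of_nonneg_left ?_ (by positivity)
        rw [Real.norm_eq_abs]
        refine (abs_sub _ _).trans ?_
        linarith [hbd (n + 1), hbd 0]
      refine squeeze_zero_norm hb ?_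
      exact tendsto_const_nhds.div_atTop
        (tendsto_natCast_atTop_atTop.atTop_add tendsto_const_nhds)
    have h4 := tendsto_nhds_unique (h2.sub h1) (h3.mono_left hle)
    linarith
  · have h1 := hlim _ (continuous_cn hd hB 1)
    refine tendsto_nhds_unique h1 ?_
    have h2 : Tendsto (fun n : ℕ => cn μ (n + 1) (v (n + 1)) / ((n + 1 : ℕ) : ℝ)) atTop (nhds β) :=
      hv.comp (tendsto_add_atTop_nat 1)
    refine (h2.mono_left hle).congr (fun n => ?_)
    rw [integral_emp _ _ (continuous_cn hd hB 1), div_eq_inv_mul]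
    congr 1
    have e : ∀ k, ∫ g, cn μ 1 (sact g (v (n + 1))) ∂(mconvN μ k) =
        cn μ (k + 1) (v (n + 1)) - cn μ k (v (n + 1)) := by
      intro k
      have := cn_add hd hB 1 k (v (n + 1))
      rw [add_comm k 1]
      linarith
    simp only [e]
    rw [Finset.sum_range_sub (fun k => cn μ k (v (n + 1)))]
    have : cn μ 0 (v (n + 1)) = 0 := by
      have := abs_cn_le hd hB 0 (v (n + 1))
      simpa using this
    rw [this, sub_zero]

lemma integrable_cont {η : Measure (Sd d)} [IsProbabilityMeasure η] {f : Sd d → ℝ}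
    (hf : Continuous f) : Integrable f η := by
  obtain ⟨C, hC⟩ := bdd_of_cont hf
  exact Integrable.of_bound hf.aestronglyMeasurable C (Filter.Eventually.of_forall hC)

lemma integral_cn_stat (hd : 0 < d) (hB : Bd μ R) {β : ℝ} {η : Measure (Sd d)}
    [IsProbabilityMeasure η] (hη : SStat μ η) (hβ : ∫ x, cn μ 1 x ∂η = β) (n : ℕ) :
    ∫ x, cn μ n x ∂η = n * β := by
  induction n with
  | zero =>
    have : ∀ x : Sd d, cn μ 0 x = 0 := by
      intro x
      have := abs_cn_le hd hB 0 x
      simpa using this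
    simp [this]
  | succ n ih =>
    have h1 : ∀ x, cn μ (n + 1) x = (∫ h, cn μ n (sact h x) ∂μ) + cn μ 1 x := by
      intro x
      have := cn_add hd hB n 1 x
      rwa [mconvN_one] at this
    simp only [h1]
    rw [integral_add (integrable_cont (continuous_Q (continuous_cn hd hB n)))
      (integrable_cont (continuous_cn hd hB 1)), ← hη _ (continuous_cn hd hB n), ih, hβ]
    push_cast; ring

end sphere
lemma exists_min_subspace (η : Measure (Sd d)) :
    ∃ V : Submodule ℝ (Ed d), (∀ᵐ (x : Sd d) ∂η, (x : Ed d) ∈ V) ∧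
      ∀ W : Submodule ℝ (Ed d), (∀ᵐ (x : Sd d) ∂η, (x : Ed d) ∈ W) → V ≤ W := by
  have hwf : WellFounded ((· < ·) : Submodule ℝ (Ed d) → Submodule ℝ (Ed d) → Prop) :=
    wellFounded_lt
  obtain ⟨V, hV, hmin⟩ := hwf.has_min {V : Submodule ℝ (Ed d) | ∀ᵐ (x : Sd d) ∂η, (x : Ed d) ∈ V}
    ⟨⊤, show ∀ᵐ (x : Sd d) ∂η, (x : Ed d) ∈ (⊤ : Submodule ℝ (Ed d)) from
      Filter.Eventually.of_forall fun x => Submodule.mem_top⟩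
  refine ⟨V, hV, fun W hW => ?_⟩
  have h1 : ∀ᵐ (x : Sd d) ∂η, (x : Ed d) ∈ V ⊓ W := by
    filter_upwards [hV, hW] with x h1 h2 using ⟨h1, h2⟩
  by_contra h
  refine hmin (V ⊓ W) h1 (lt_of_le_of_ne inf_le_left ?_)
  intro he
  exact h (inf_eq_left.1 he)

section lower
variable {μ : Measure (GLd d)} [IsProbabilityMeasure μ] {R : ℝ}

lemma SStat_map {η : Measure (Sd d)} [IsProbabilityMeasure η] (hη : SStat μ η) :
    η = (μ.prod η).map (fun p : GLd d × Sd d => sact p.1 p.2) := by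
  have hm : AEMeasurable (fun p : GLd d × Sd d => sact p.1 p.2) (μ.prod η) :=
    continuous_sact.measurable.aemeasurable
  have : IsProbabilityMeasure ((μ.prod η).map (fun p : GLd d × Sd d => sact p.1 p.2)) :=
    Measure.isProbabilityMeasure_map hm
  apply ext_of_forall_integral_eq_of_IsFiniteMeasure
  intro f
  rw [hη f f.continuous, integral_map hm f.continuous.aestronglyMeasurable]
  obtain ⟨C, hC⟩ := bdd_of_cont f.continuous
  have hc : Measurable (fun p : GLd d × Sd d => f (sact p.1 p.2)) :=
    (f.continuous.comp continuous_sact).measurable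
  have hi : Integrable (fun p : GLd d × Sd d => f (sact p.1 p.2)) (μ.prod η) :=
    Integrable.of_bound hc.aestronglyMeasurable C (Filter.Eventually.of_forall fun p => hC _)
  rw [integral_prod_symm _ hi]

lemma min_subspace_inv {η : Measure (Sd d)} [IsProbabilityMeasure η] (hη : SStat μ η)
    {V : Submodule ℝ (Ed d)} (hV : ∀ᵐ (x : Sd d) ∂η, (x : Ed d) ∈ V)
    (hmin : ∀ W : Submodule ℝ (Ed d), (∀ᵐ (x : Sd d) ∂η, (x : Ed d) ∈ W) → V ≤ W) :
    ∀ᵐ g ∂μ, ∀ v ∈ V, glCLM g v ∈ V := by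
  have hms : MeasurableSet {x : Sd d | (x : Ed d) ∈ V} :=
    ((V.closed_of_finiteDimensional).preimage continuous_subtype_val).measurableSet
  rw [SStat_map hη, ae_map_iff continuous_sact.measurable.aemeasurable hms] at hV
  have h1 := Measure.ae_ae_of_ae_prod hV
  filter_upwards [h1] with g hg
  have h2 : ∀ᵐ (x : Sd d) ∂η, (x : Ed d) ∈ V.comap (glCLM g).toLinearMap := by
    filter_upwards [hg] with x hx
    rw [sact_coe] at hx
    rw [Submodule.mem_comap]
    have hn : ‖glCLM g (x : Ed d)‖ ≠ 0 := norm_ne_zero_iff.2 (glCLM_ne_zero g (Sd_ne x))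
    exact (V.smul_mem_iff (inv_ne_zero hn)).1 hx
  exact fun v hv => hmin _ h2 hv

lemma choose_t {c M : ℝ} (hc : 0 < c) (hM : 0 ≤ M) :
    ∃ t : ℝ, 0 < t ∧ t ≤ 1 ∧ t * M ≤ 1 ∧ t * M ^ 2 ≤ c / 2 := by
  refine ⟨min (1 / (M + 1)) (c / 2 / (M ^ 2 + 1)), ?_, ?_, ?_, ?_⟩
  · positivity
  · refine (min_le_left _ _).trans ?_
    rw [div_le_one (by positivity)]; linarith
  · refine (mul_le_mul_of_nonneg_right (min_le_left _ _) hM).trans ?_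
    rw [div_mul_eq_mul_div, div_le_one (by positivity)]; linarith
  · refine (mul_le_mul_of_nonneg_right (min_le_right _ _) (sq_nonneg M)).trans ?_
    rw [div_mul_eq_mul_div, div_le_iff₀ (by positivity)]
    nlinarith

lemma lower_moment (hd : 0 < d) (hB : Bd μ R) {β : ℝ}
    (hβ : ∀ ε > 0, ∀ᶠ n : ℕ in atTop, ∀ v, n * (β - ε) ≤ cn μ n v) {ε : ℝ} (hε : 0 < ε) :
    ∃ m : ℕ, 0 < m ∧ ∃ t : ℝ, 0 < t ∧ ∀ (k : ℕ) (v : Sd d),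
      ∫ g, Real.exp (t * ((k * m : ℕ) * (β - 2 * ε) - sig g v)) ∂(mconvN μ (k * m)) ≤ 1 := by
  obtain ⟨m, hm, hm0⟩ := ((hβ ε hε).and (eventually_gt_atTop 0)).exists
  have hm' : (0 : ℝ) < m := by exact_mod_cast hm0
  obtain ⟨t, ht, -, htM, htM2⟩ := choose_t (c := m * ε) (M := |m * (β - 2 * ε)| + m * R)
    (by positivity) (by have := hB.1; positivity)
  refine ⟨m, hm0, t, ht, ?_⟩
  have hstep : ∀ v : Sd d,
      ∫ g, Real.exp (t * (m * (β - 2 * ε) - sig g v)) ∂(mconvN μ m) ≤ 1 := by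
    intro v
    have h1 := exp_moment (mconvN μ m) (Z := fun g => m * (β - 2 * ε) - sig g v)
      (M := |m * (β - 2 * ε)| + m * R) (c := m * ε) (t := t)
      (continuous_const.sub (sig_cont_left v)).aestronglyMeasurable ?_ ?_ ht.le htM
    · refine h1.trans ?_
      nlinarith [mul_le_mul_of_nonneg_left htM2 ht.le, mul_pos hm' hε, mul_pos ht (mul_pos hm' hε)]
    · filter_upwards [ae_sig hd hB m v] with g hg
      refine (abs_sub _ _).trans ?_
      linarith
    · rw [integral_sub (integrable_const _) (integrable_sig hd hB m v)]
      have := hm v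
      simp only [integral_const, probReal_univ, smul_eq_mul, one_mul]
      unfold cn at this
      linarith
  have hIntg : ∀ (n : ℕ) (a : ℝ) (v : Sd d),
      Integrable (fun g => Real.exp (t * (a - sig g v))) (mconvN μ n) := by
    intro n a v
    refine integrable_bd (C := Real.exp (t * (a + n * R))) ?_ ?_
    · exact (Real.continuous_exp.comp
        (continuous_const.mul (continuous_const.sub (sig_cont_left v)))).measurable
    · filter_upwards [ae_sig hd hB n v] with g hg
      rw [abs_of_pos (Real.exp_pos _)]
      apply Real.exp_le_exp.2
      apply mul_le_mul_of_nonneg_left _ ht.le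
      linarith [(abs_le.1 hg).1]
  intro k
  induction k with
  | zero =>
    intro v
    have hs : sig (1 : GLd d) v = 0 := by
      unfold sig; rw [glCLM_one]; simp
    have e : 0 * m = 0 := zero_mul m
    rw [e, mconvN, integral_dirac]
    simp [hs]
  | succ k ih =>
    intro v
    have e : (k + 1) * m = k * m + m := by ring
    rw [e, integral_conv_symm (hIntg _ _ v)]
    have h1 : ∀ h : GLd d, ∫ g, Real.exp (t * ((k * m + m : ℕ) * (β - 2 * ε) - sig (g * h) v))
        ∂(mconvN μ (k * m)) ≤ Real.exp (t * (m * (β - 2 * ε) - sig h v)) := by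
      intro h
      have h2 : ∀ g : GLd d, Real.exp (t * ((k * m + m : ℕ) * (β - 2 * ε) - sig (g * h) v)) =
          Real.exp (t * (m * (β - 2 * ε) - sig h v)) *
          Real.exp (t * ((k * m : ℕ) * (β - 2 * ε) - sig g (sact h v))) := by
        intro g
        rw [← Real.exp_add, sig_mul]
        congr 1
        push_cast
        ring
      simp only [h2]
      rw [integral_const_mul]
      exact mul_le_of_le_one_right (Real.exp_pos _).le (ih _)
    exact (integral_mono (integrable_conv_right (hIntg _ _ v)) (hIntg _ _ v) h1).trans (hstep v)

/-- Mean deviation. -/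
def Hn (μ : Measure (GLd d)) (β : ℝ) (n : ℕ) (v : Sd d) : ℝ :=
  ∫ g, |sig g v - n * β| ∂(mconvN μ n)

lemma ae_dev (hd : 0 < d) (hB : Bd μ R) (β : ℝ) (n : ℕ) (v : Sd d) :
    ∀ᵐ g ∂(mconvN μ n), |(|sig g v - n * β|)| ≤ n * R + |n * β| := by
  filter_upwards [ae_sig hd hB n v] with g hg
  rw [abs_abs]
  refine (abs_sub _ _).trans ?_
  linarith

lemma dev_cont (β : ℝ) (n : ℕ) (v : Sd d) : Continuous (fun g : GLd d => |sig g v - n * β|) :=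
  ((sig_cont_left v).sub continuous_const).abs

lemma integrable_dev (hd : 0 < d) (hB : Bd μ R) (β : ℝ) (n : ℕ) (v : Sd d) :
    Integrable (fun g => |sig g v - n * β|) (mconvN μ n) :=
  integrable_bd (dev_cont β n v).measurable (ae_dev hd hB β n v)

lemma continuous_Hn (hd : 0 < d) (hB : Bd μ R) (β : ℝ) (n : ℕ) : Continuous (Hn μ β n) := by
  unfold Hn
  refine continuous_of_dominated (bound := fun _ => n * R + |n * β|) ?_ ?_ (integrable_const _) ?_
  · exact fun v => (dev_cont β n v).aestronglyMeasurable
  · exact fun v => ae_dev hd hB β n v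
  · exact Filter.Eventually.of_forall fun g => ((sig_cont_right g).sub continuous_const).abs

lemma dev_small (hd : 0 < d) (hB : Bd μ R) {β : ℝ}
    (hβ : ∀ ε > 0, ∀ᶠ n : ℕ in atTop, ∀ v, n * (β - ε) ≤ cn μ n v)
    {η : Measure (Sd d)} [IsProbabilityMeasure η] (hη : SStat μ η) (hη1 : ∫ x, cn μ 1 x ∂η = β)
    {ε : ℝ} (hε : 0 < ε) (N : ℕ) :
    ∃ n : ℕ, N ≤ n ∧ 0 < n ∧ ∫ x, Hn μ β n x ∂η ≤ 5 * ε * n := by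
  obtain ⟨m, hm, t, ht, hk⟩ := lower_moment hd hB hβ hε
  obtain ⟨k0, hk0⟩ := exists_nat_gt (2 / t / ε)
  set k := max (max N 1) k0 with hkdef
  have hkm : k ≤ k * m := Nat.le_mul_of_pos_right k hm
  have hN : N ≤ k := (le_max_left _ _).trans (le_max_left _ _)
  have h1k : 1 ≤ k := (le_max_right _ _).trans (le_max_left _ _)
  refine ⟨k * m, hN.trans hkm, by omega, ?_⟩
  set n := k * m with hn
  have hpt : ∀ v : Sd d, Hn μ β n v ≤ cn μ n v + (-(n * β) + 4 * n * ε + 2 / t) := by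
    intro v
    have hexp : Integrable
        (fun g => Real.exp (t * ((n : ℕ) * (β - 2 * ε) - sig g v))) (mconvN μ n) := by
      refine integrable_bd (C := Real.exp (t * (n * (β - 2 * ε) + n * R))) ?_ ?_
      · exact (Real.continuous_exp.comp
          (continuous_const.mul (continuous_const.sub (sig_cont_left v)))).measurable
      · filter_upwards [ae_sig hd hB n v] with g hg
        rw [abs_of_pos (Real.exp_pos _)]
        apply Real.exp_le_exp.2
        apply mul_le_mul_of_nonneg_left _ ht.le
        linarith [(abs_le.1 hg).1]
    have hb : ∀ g : GLd d, |sig g v - n * β| ≤ sig g v + ((-(n * β) + 4 * n * ε) +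
        2 / t * Real.exp (t * ((n : ℕ) * (β - 2 * ε) - sig g v))) := by
      intro g
      have he := Real.add_one_le_exp (t * ((n : ℕ) * (β - 2 * ε) - sig g v))
      have hp := Real.exp_pos (t * ((n : ℕ) * (β - 2 * ε) - sig g v))
      set E := Real.exp (t * ((n : ℕ) * (β - 2 * ε) - sig g v)) with hE
      have h3 : (n : ℕ) * (β - 2 * ε) - sig g v ≤ 1 / t * E := by
        rw [div_mul_eq_mul_div, le_div_iff₀ ht]; linarith
      have h4 : 0 < 1 / t * E := by positivity
      have h5 : 2 / t * E = 2 * (1 / t * E) := by ring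
      have h6 : 0 ≤ (n : ℝ) * ε := by positivity
      rw [h5]
      rw [abs_le]
      constructor <;> linarith
    have hce : Integrable (fun g => (-(n * β) + 4 * n * ε) +
        2 / t * Real.exp (t * ((n : ℕ) * (β - 2 * ε) - sig g v))) (mconvN μ n) :=
      (integrable_const _).add (hexp.const_mul _)
    have := integral_mono (integrable_dev hd hB β n v)
      ((integrable_sig hd hB n v).add hce) hb
    refine this.trans ?_
    simp only [Pi.add_apply]
    rw [integral_add (integrable_sig hd hB n v) hce,
      integral_add (integrable_const _) (hexp.const_mul _), integral_const_mul]
    have h7 := hk k v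
    simp only [integral_const, probReal_univ, smul_eq_mul, one_mul]
    unfold cn
    have h8 : 2 / t * ∫ g, Real.exp (t * ((n : ℕ) * (β - 2 * ε) - sig g v)) ∂(mconvN μ n) ≤ 2 / t :=
      mul_le_of_le_one_right (by positivity) h7
    linarith
  have h1 := integral_mono (integrable_cont (η := η) (continuous_Hn hd hB β n))
    ((integrable_cont (η := η) (continuous_cn hd hB n)).add (integrable_const _)) hpt
  refine h1.trans ?_
  simp only [Pi.add_apply]
  rw [integral_add (integrable_cont (continuous_cn hd hB n)) (integrable_const _),
    integral_cn_stat hd hB hη hη1]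
  simp only [integral_const, probReal_univ, smul_eq_mul, one_mul]
  have h2 : 2 / t ≤ n * ε := by
    have : (k0 : ℝ) ≤ n := by
      have : k0 ≤ n := (le_max_right _ _).trans hkm
      exact_mod_cast this
    rw [div_lt_iff₀ hε] at hk0
    nlinarith
  linarith

lemma exists_good_seq (hd : 0 < d) (hB : Bd μ R) {β : ℝ}
    (hβ : ∀ ε > 0, ∀ᶠ n : ℕ in atTop, ∀ v, n * (β - ε) ≤ cn μ n v)
    {η : Measure (Sd d)} [IsProbabilityMeasure η] (hη : SStat μ η) (hη1 : ∫ x, cn μ 1 x ∂η = β) :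
    ∃ n : ℕ → ℕ, Tendsto n atTop atTop ∧ (∀ j, 0 < n j) ∧
      ∀ᵐ x ∂η, Tendsto (fun j => Hn μ β (n j) x / (n j : ℝ)) atTop (nhds 0) := by
  have h := fun j : ℕ => dev_small hd hB hβ hη hη1 (ε := 1 / ((j : ℝ) + 1)) (by positivity) j
  choose n hn hn0 hnH using h
  have hT : Tendsto n atTop atTop := tendsto_atTop_mono hn tendsto_id
  have hm : TendstoInMeasure η (fun j x => Hn μ β (n j) x / (n j : ℝ)) atTop (fun _ => 0) := by
    refine tendstoInMeasure_of_tendsto_eLpNorm (p := 1) one_ne_zero ?_ ?_ ?_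
    · exact fun j => ((continuous_Hn hd hB β (n j)).div_const _).aestronglyMeasurable
    · exact aestronglyMeasurable_const
    · have hle : ∀ j, eLpNorm ((fun x => Hn μ β (n j) x / (n j : ℝ)) - fun _ => 0) 1 η ≤
          ENNReal.ofReal (5 * (1 / ((j : ℝ) + 1))) := by
        intro j
        have e : ((fun x => Hn μ β (n j) x / (n j : ℝ)) - fun _ => (0 : ℝ)) =
          fun x => Hn μ β (n j) x / (n j : ℝ) := by
          funext x; simp
        rw [e, eLpNorm_one_eq_lintegral_enorm, ← ofReal_integral_norm_eq_lintegral_enorm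
          (integrable_cont ((continuous_Hn hd hB β (n j)).div_const _))]
        apply ENNReal.ofReal_le_ofReal
        have hp : (0 : ℝ) < n j := by exact_mod_cast hn0 j
        have e2 : ∀ x, ‖Hn μ β (n j) x / (n j : ℝ)‖ = Hn μ β (n j) x / (n j : ℝ) := by
          intro x
          rw [Real.norm_of_nonneg]
          refine div_nonneg ?_ hp.le
          unfold Hn
          exact integral_nonneg (fun g => abs_nonneg _)
        simp only [e2]
        rw [integral_div, div_le_iff₀ hp]
        exact hnH j
      refine tendsto_of_tendsto_of_tendsto_of_le_of_le tendsto_const_nhds ?_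
        (fun j => zero_le) hle
      have : Tendsto (fun j : ℕ => 5 * (1 / ((j : ℝ) + 1))) atTop (nhds (5 * 0)) :=
        tendsto_one_div_add_atTop_nhds_zero_nat.const_mul 5
      have := ENNReal.tendsto_ofReal this
      simpa using this
  obtain ⟨s, hs, hae⟩ := hm.exists_seq_tendsto_ae
  exact ⟨fun j => n (s j), hT.comp hs.tendsto_atTop, fun j => hn0 _, hae⟩

lemma rnorm_le_sum (t : Finset (Sd d)) {V : Submodule ℝ (Ed d)}
    (hV : V ≤ Submodule.span ℝ ((fun x : Sd d => (x : Ed d)) '' (t : Set (Sd d)))) :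
    ∃ C : ℝ, 0 ≤ C ∧ ∀ g : GLd d, rnorm V g ≤ C * ∑ x ∈ t, ‖glCLM g (x : Ed d)‖ := by
  let T : (t → ℝ) →ₗ[ℝ] Ed d := Fintype.linearCombination ℝ (fun i : t => ((i : Sd d) : Ed d))
  have hrange : LinearMap.range T =
      Submodule.span ℝ ((fun x : Sd d => (x : Ed d)) '' (t : Set (Sd d))) := by
    rw [Fintype.range_linearCombination]
    congr 1
    ext y
    constructor
    · rintro ⟨i, rfl⟩
      exact ⟨i.1, i.2, rfl⟩
    · rintro ⟨x, hx, rfl⟩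
      exact ⟨⟨x, hx⟩, rfl⟩
  obtain ⟨L, hL⟩ := T.rangeRestrict.exists_rightInverse_of_surjective T.range_rangeRestrict
  refine ⟨‖LinearMap.toContinuousLinearMap L‖, norm_nonneg (LinearMap.toContinuousLinearMap L), fun g => ?_⟩
  refine rnorm_le _ _ (mul_nonneg (norm_nonneg (LinearMap.toContinuousLinearMap L)) (Finset.sum_nonneg fun x _ => norm_nonneg _)) ?_
  intro v hv
  have hvr : v ∈ LinearMap.range T := hrange ▸ hV hv
  have h1 : T (L ⟨v, hvr⟩) = v := by
    have := congrArg (fun f => ((f ⟨v, hvr⟩ : LinearMap.range T) : Ed d)) hL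
    simpa using this
  have h2 : ‖L ⟨v, hvr⟩‖ ≤ ‖LinearMap.toContinuousLinearMap L‖ * ‖v‖ :=
    (LinearMap.toContinuousLinearMap L).le_opNorm ⟨v, hvr⟩
  have h3 : glCLM g v = ∑ i : t, L ⟨v, hvr⟩ i • glCLM g ((i : Sd d) : Ed d) := by
    conv_lhs => rw [← h1]
    simp only [T, Fintype.linearCombination_apply, map_sum, map_smul]
  rw [h3]
  refine (norm_sum_le _ _).trans ?_
  have h4 : ∑ x ∈ t, ‖glCLM g (x : Ed d)‖ = ∑ i : t, ‖glCLM g ((i : Sd d) : Ed d)‖ :=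
    (Finset.sum_coe_sort t (fun x : Sd d => ‖glCLM g (x : Ed d)‖)).symm
  rw [h4, mul_right_comm, Finset.mul_sum]
  refine Finset.sum_le_sum (fun i _ => ?_)
  rw [norm_smul]
  exact mul_le_mul_of_nonneg_right ((norm_le_pi_norm _ i).trans h2) (norm_nonneg _)

lemma L1rest_le (hd : 0 < d) (hB : Bd μ R) {β : ℝ} {V : Submodule ℝ (Ed d)} (hV : V ≠ ⊥)
    (hinv : ∀ᵐ g ∂μ, ∀ v ∈ V, glCLM g v ∈ V)
    (t : Finset (Sd d))
    (hVt : V ≤ Submodule.span ℝ ((fun x : Sd d => (x : Ed d)) '' (t : Set (Sd d))))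
    {n : ℕ → ℕ} (hn : Tendsto n atTop atTop) (hn0 : ∀ j, 0 < n j)
    (hH : ∀ x ∈ t, Tendsto (fun j => Hn μ β (n j) x / (n j : ℝ)) atTop (nhds 0)) :
    L1rest μ V ≤ β := by
  obtain ⟨C, hC, hCg⟩ := rnorm_le_sum t hVt
  set K : ℝ := C * t.card + 1 with hK
  have hKp : 0 < K := by positivity
  have hpt : ∀ (n : ℕ) (g : GLd d), Real.log (rnorm V g) ≤
      (Real.log K + n * β) + ∑ x ∈ t, |sig g x - n * β| := by
    intro n g
    have h1 : ∀ x ∈ t, ‖glCLM g (x : Ed d)‖ ≤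
        Real.exp (n * β + ∑ x ∈ t, |sig g x - n * β|) := by
      intro x hx
      have hp : 0 < ‖glCLM g (x : Ed d)‖ := norm_pos_iff.2 (glCLM_ne_zero g (Sd_ne x))
      rw [← Real.exp_log hp]
      apply Real.exp_le_exp.2
      have h2 : |sig g x - n * β| ≤ ∑ x ∈ t, |sig g x - n * β| :=
        Finset.single_le_sum (f := fun x => |sig g x - n * β|) (fun _ _ => abs_nonneg _) hx
      have h3 := le_abs_self (sig g x - n * β)
      have h4 : Real.log ‖glCLM g (x : Ed d)‖ = sig g x := rfl
      rw [h4]; linarith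
    have h2 := Finset.sum_le_card_nsmul t _ _ h1
    rw [nsmul_eq_mul] at h2
    have h3 : rnorm V g ≤ K * Real.exp (n * β + ∑ x ∈ t, |sig g x - n * β|) := by
      refine (hCg g).trans ((mul_le_mul_of_nonneg_left h2 hC).trans ?_)
      rw [← mul_assoc]
      exact mul_le_mul_of_nonneg_right (by linarith) (Real.exp_pos _).le
    have h4 := Real.log_le_log (rnorm_pos hV g) h3
    rw [Real.log_mul hKp.ne' (Real.exp_pos _).ne', Real.log_exp] at h4
    linarith
  have hir : ∀ n, Integrable (fun g => Real.log (rnorm V g)) (mconvN μ n) := by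
    intro n
    refine integrable_bd (C := n * R)
      ((continuous_rnorm V).log (fun g => (rnorm_pos hV g).ne')).measurable ?_
    filter_upwards [hB.2 n] with g hg using (abs_log_rnorm hd hV g).trans hg
  have hIntg : ∀ n : ℕ, ∫ g, Real.log (rnorm V g) ∂(mconvN μ n) ≤
      (Real.log K + n * β) + ∑ x ∈ t, Hn μ β n x := by
    intro n
    have hs : Integrable (fun g => ∑ x ∈ t, |sig g x - n * β|) (mconvN μ n) :=
      integrable_finsetSum _ (fun x _ => integrable_dev hd hB β n x)
    refine (integral_mono (hir n) ((integrable_const _).add hs) (hpt n)).trans ?_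
    simp only [Pi.add_apply]
    rw [integral_add (integrable_const _) hs,
      integral_finsetSum _ (fun x _ => integrable_dev hd hB β n x)]
    simp [Hn]
  have hl := (L1rest_tendsto hd hB hV hinv).comp hn
  have hnr : Tendsto (fun j => (n j : ℝ)) atTop atTop := tendsto_natCast_atTop_atTop.comp hn
  have hr : Tendsto (fun j => (Real.log K / (n j : ℝ) + β) + ∑ x ∈ t, Hn μ β (n j) x / (n j : ℝ))
      atTop (nhds ((0 + β) + ∑ x ∈ t, (0 : ℝ))) :=
    ((tendsto_const_nhds.div_atTop hnr).add tendsto_const_nhds).add (tendsto_finsetSum _ hH)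
  simp only [zero_add, Finset.sum_const_zero, add_zero] at hr
  refine le_of_tendsto_of_tendsto' hl hr (fun j => ?_)
  have hp : (0 : ℝ) < n j := by exact_mod_cast hn0 j
  simp only [Function.comp]
  rw [inv_mul_le_iff₀ hp]
  refine (hIntg (n j)).trans (le_of_eq ?_)
  rw [← Finset.sum_div]
  field_simp

/-- Furstenberg–Kifer type uniform lower bound. -/
lemma uniform_lower (hd : 0 < d) (hB : Bd μ R) (hqi : QuasiIrreducible μ) :
    ∀ ε > 0, ∀ᶠ n : ℕ in atTop, ∀ v : Sd d, n * (L1 μ - ε) ≤ cn μ n v := by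
  obtain ⟨β, hβ, v, hv⟩ := exists_beta hd hB
  obtain ⟨η, hηp, hη, hη1⟩ := exists_stat hd hB hv
  obtain ⟨V, hV, hmin⟩ := exists_min_subspace η
  have hinv := min_subspace_inv hη hV hmin
  have hV0 : V ≠ ⊥ := by
    rintro rfl
    obtain ⟨x, hx⟩ := hV.exists
    exact Sd_ne x ((Submodule.mem_bot ℝ).1 hx)
  obtain ⟨n, hn, hn0, hae⟩ := exists_good_seq hd hB hβ hη hη1
  set G : Set (Sd d) :=
    {x | Tendsto (fun j => Hn μ β (n j) x / (n j : ℝ)) atTop (nhds 0)} with hG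
  have hVG : V ≤ Submodule.span ℝ ((fun x : Sd d => (x : Ed d)) '' G) := by
    apply hmin
    filter_upwards [hae] with x hx
    exact Submodule.subset_span ⟨x, hx, rfl⟩
  have hfg : (Submodule.span ℝ ((fun x : Sd d => (x : Ed d)) '' G)).FG :=
    IsNoetherian.noetherian _
  obtain ⟨t', ht', hspan⟩ := (Submodule.fg_span_iff_fg_span_finset_subset _).1 hfg
  obtain ⟨t, htG, rfl⟩ := (Finset.subset_set_image_iff).1 ht'
  rw [hspan, Finset.coe_image] at hVG
  have hle : L1rest μ V ≤ β := L1rest_le hd hB hV0 hinv t hVG hn hn0 (fun x hx => htG hx)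
  have hL : L1 μ ≤ β := by
    by_cases hT : V = ⊤
    · subst hT
      have h1 := L1rest_tendsto hd hB hV0 hinv
      simp only [rnorm_top] at h1
      rw [tendsto_nhds_unique (L1_tendsto hd hB) h1]
      exact hle
    · by_contra hlt
      push Not at hlt
      refine hqi ⟨V, hV0, hT, ?_, lt_of_le_of_lt hle hlt⟩
      filter_upwards [hinv] with g hg
      have h1 : V.map (glCLM g).toLinearMap ≤ V := by
        rintro _ ⟨w, hw, rfl⟩
        exact hg w hw
      refine Submodule.eq_of_le_of_finrank_eq h1 ?_
      exact (LinearEquiv.finrank_eq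
        (Submodule.equivMapOfInjective _ (glLinear_injective g) V)).symm
  intro ε hε
  filter_upwards [hβ ε hε] with k hk w
  refine le_trans ?_ (hk w)
  exact mul_le_mul_of_nonneg_left (by linarith) (Nat.cast_nonneg k)

end lower
section contraction
variable {μ : Measure (GLd d)} [IsProbabilityMeasure μ] {R : ℝ}

/-- Sine of the angle between two unit vectors. -/
def sD (x y : Sd d) : ℝ := area (x : Ed d) (y : Ed d)

lemma sD_nonneg (x y : Sd d) : 0 ≤ sD x y := area_nonneg _ _

lemma sD_le_one (x y : Sd d) : sD x y ≤ 1 := by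
  have := area_le (x : Ed d) (y : Ed d)
  rwa [Sd_norm, Sd_norm, one_mul] at this

lemma continuous_sD : Continuous (fun p : Sd d × Sd d => sD p.1 p.2) := by
  have h0 : Continuous (fun p : Sd d × Sd d => ((p.1 : Ed d), (p.2 : Ed d))) :=
    (continuous_subtype_val.comp continuous_fst).prodMk
      (continuous_subtype_val.comp continuous_snd)
  have h := continuous_area.comp h0
  exact h

/-- Exponent of contraction. -/
def Zf (x y : Sd d) (g : GLd d) : ℝ := Real.log (N2 g) - (sig g x + sig g y)

lemma measurable_Zf (x y : Sd d) : Measurable (Zf x y) :=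
  measurable_N2.log.sub ((sig_cont_left x).measurable.add (sig_cont_left y).measurable)

lemma sD_sact_le (hd : 2 ≤ d) (g : GLd d) (x y : Sd d) :
    sD (sact g x) (sact g y) ≤ Real.exp (Zf x y g) * sD x y := by
  have hx : 0 < ‖glCLM g (x : Ed d)‖ := norm_pos_iff.2 (glCLM_ne_zero g (Sd_ne x))
  have hy : 0 < ‖glCLM g (y : Ed d)‖ := norm_pos_iff.2 (glCLM_ne_zero g (Sd_ne y))
  have h1 := area_map_le g (x : Ed d) (y : Ed d)
  have h2 : Real.exp (Zf x y g) = ‖glCLM g (x : Ed d)‖⁻¹ * (‖glCLM g (y : Ed d)‖⁻¹ * N2 g) := by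
    unfold Zf sig
    rw [Real.exp_sub, Real.exp_add, Real.exp_log hx, Real.exp_log hy, Real.exp_log (N2_pos hd g)]
    field_simp
  unfold sD
  rw [sact_coe, sact_coe, area_smul_left, area_smul_right, abs_of_pos (inv_pos.2 hx),
    abs_of_pos (inv_pos.2 hy), h2, mul_assoc, mul_assoc]
  gcongr

lemma ae_Zf (hd : 2 ≤ d) (hB : Bd μ R) (n : ℕ) (x y : Sd d) :
    ∀ᵐ g ∂(mconvN μ n), |Zf x y g| ≤ 4 * (n * R) := by
  filter_upwards [hB.2 n] with g hg
  have h1 := abs_log_N2 hd g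
  have h2 := abs_sig_le (by omega) g x
  have h3 := abs_sig_le (by omega) g y
  unfold Zf
  rw [abs_le] at *
  constructor <;> linarith

lemma integrable_logN2 (hd : 2 ≤ d) (hB : Bd μ R) (n : ℕ) :
    Integrable (fun g => Real.log (N2 g)) (mconvN μ n) := by
  refine integrable_bd (C := 2 * (n * R)) measurable_N2.log ?_
  filter_upwards [hB.2 n] with g hg
  have h1 := abs_log_N2 hd g
  linarith

lemma integrable_sDt (n : ℕ) {t : ℝ} (ht : 0 < t) (x y : Sd d) :
    Integrable (fun g => sD (sact g x) (sact g y) ^ t) (mconvN μ n) := by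
  have hc : Continuous (fun g : GLd d => sD (sact g x) (sact g y)) := by
    have h := continuous_sD.comp ((sact_cont_left x).prodMk (sact_cont_left y))
    exact h
  refine integrable_bd (C := 1) (hc.rpow_const (fun _ => Or.inr ht.le)).measurable ?_
  refine Filter.Eventually.of_forall fun g => ?_
  rw [abs_of_nonneg (Real.rpow_nonneg (sD_nonneg _ _) _)]
  exact Real.rpow_le_one (sD_nonneg _ _) (sD_le_one _ _) ht.le

lemma contraction (hd : 2 ≤ d) (hB : Bd μ R) (hqi : QuasiIrreducible μ) (hgap : L2 μ < L1 μ) :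
    ∃ (m : ℕ) (t ρ : ℝ), 0 < t ∧ t ≤ 1 ∧ 0 ≤ ρ ∧ ρ < 1 ∧ ∀ (k : ℕ) (x y : Sd d),
      ∫ g, sD (sact g x) (sact g y) ^ t ∂(mconvN μ (k * m)) ≤ ρ ^ k * sD x y ^ t := by
  have hd0 : 0 < d := by omega
  set c := L1 μ - L2 μ with hc
  have hcp : 0 < c := by linarith
  have hL : L12 μ = 2 * L1 μ - c := by rw [hc]; unfold L2; ring
  have e1 : ∀ᶠ n : ℕ in atTop,
      (n : ℝ)⁻¹ * ∫ g, Real.log (N2 g) ∂(mconvN μ n) < L12 μ + c / 6 :=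
    (L12_tendsto hd hB).eventually (gt_mem_nhds (by linarith))
  obtain ⟨m, ⟨h1, h2⟩, hm0⟩ :=
    ((e1.and (uniform_lower hd0 hB hqi (c / 6) (by positivity))).and
      (eventually_gt_atTop 0)).exists
  have hm : (0 : ℝ) < m := by exact_mod_cast hm0
  rw [inv_mul_lt_iff₀ hm, hL] at h1
  have hR := hB.1
  obtain ⟨t, ht, ht1, htM, htM2⟩ := choose_t (c := m * c / 2) (M := 4 * (m * R))
    (by positivity) (by positivity)
  have hmom : ∀ x y : Sd d, ∫ g, Real.exp (t * Zf x y g) ∂(mconvN μ m) ≤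
      max 0 (1 - t * (m * c / 4)) := by
    intro x y
    have h3 := exp_moment (mconvN μ m) (Z := Zf x y) (M := 4 * (m * R)) (c := m * c / 2) (t := t)
      (measurable_Zf x y).aestronglyMeasurable (ae_Zf hd hB m x y) ?_ ht.le htM
    · refine h3.trans ((?_ : _ ≤ _).trans (le_max_right _ _))
      nlinarith [mul_le_mul_of_nonneg_left htM2 ht.le]
    · unfold Zf
      have hs : Integrable (fun g => sig g x + sig g y) (mconvN μ m) :=
        (integrable_sig hd0 hB m x).add (integrable_sig hd0 hB m y)
      rw [integral_sub (integrable_logN2 hd hB m) hs,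
        integral_add (integrable_sig hd0 hB m x) (integrable_sig hd0 hB m y)]
      have h4 := h2 x
      have h5 := h2 y
      unfold cn at h4 h5
      nlinarith
  have hstep : ∀ x y : Sd d, ∫ g, sD (sact g x) (sact g y) ^ t ∂(mconvN μ m) ≤
      max 0 (1 - t * (m * c / 4)) * sD x y ^ t := by
    intro x y
    have hi : Integrable (fun g => Real.exp (t * Zf x y g)) (mconvN μ m) := by
      refine integrable_bd (C := Real.exp (t * (4 * (m * R))))
        ((measurable_Zf x y).const_mul t).exp ?_
      filter_upwards [ae_Zf hd hB m x y] with g hg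
      rw [abs_of_pos (Real.exp_pos _)]
      apply Real.exp_le_exp.2
      exact mul_le_mul_of_nonneg_left ((le_abs_self _).trans hg) ht.le
    have h3 : ∀ g : GLd d, sD (sact g x) (sact g y) ^ t ≤
        Real.exp (t * Zf x y g) * sD x y ^ t := by
      intro g
      have h4 := Real.rpow_le_rpow (sD_nonneg _ _) (sD_sact_le hd g x y) ht.le
      rw [Real.mul_rpow (Real.exp_pos _).le (sD_nonneg _ _), ← Real.exp_mul, mul_comm _ t] at h4
      exact h4
    have h4 := integral_mono (integrable_sDt m ht x y) (hi.mul_const _) h3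
    rw [integral_mul_const] at h4
    exact h4.trans (mul_le_mul_of_nonneg_right (hmom x y) (Real.rpow_nonneg (sD_nonneg _ _) _))
  refine ⟨m, t, max 0 (1 - t * (m * c / 4)), ht, ht1, le_max_left _ _, ?_, ?_⟩
  · apply max_lt one_pos
    have : 0 < t * (m * c / 4) := by positivity
    linarith
  have hρ : 0 ≤ max 0 (1 - t * (m * c / 4)) := le_max_left _ _
  set ρ := max 0 (1 - t * (m * c / 4)) with hρdef
  intro k
  induction k with
  | zero =>
    intro x y
    have e : 0 * m = 0 := zero_mul m
    rw [e, mconvN, integral_dirac, sact_one, sact_one, pow_zero, one_mul]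
  | succ k ih =>
    intro x y
    have e : (k + 1) * m = k * m + m := by ring
    rw [e, integral_conv_symm (integrable_sDt _ ht x y)]
    have h3 : ∀ h : GLd d,
        ∫ g, sD (sact (g * h) x) (sact (g * h) y) ^ t ∂(mconvN μ (k * m)) ≤
        ρ ^ k * sD (sact h x) (sact h y) ^ t := by
      intro h
      simp only [sact_mul]
      exact ih _ _
    have h4 := integral_mono (integrable_conv_right (integrable_sDt (k * m + m) ht x y))
      ((integrable_sDt m ht x y).const_mul (ρ ^ k)) h3
    refine h4.trans ?_
    rw [integral_const_mul, pow_succ, mul_assoc]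
    exact mul_le_mul_of_nonneg_left (hstep x y) (pow_nonneg hρ k)

end contraction
/-- The quotient map to projective space. -/
def pmk (v : {v : Ed d // v ≠ 0}) : Pd d := Projectivization.mk ℝ v.1 v.2

lemma isQuotientMap_pmk : Topology.IsQuotientMap (pmk : {v : Ed d // v ≠ 0} → Pd d) :=
  isQuotientMap_quotient_mk' (s := projectivizationSetoid ℝ (Ed d))

lemma isOpenMap_pmk : IsOpenMap (pmk : {v : Ed d // v ≠ 0} → Pd d) := by
  intro U hU
  rw [← isQuotientMap_pmk.isOpen_preimage]
  have h : pmk ⁻¹' (pmk '' U) = ⋃ a : ℝˣ, (fun v : {v : Ed d // v ≠ 0} =>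
      (⟨a • v.1, (smul_ne_zero_iff_ne a).2 v.2⟩ : {v : Ed d // v ≠ 0})) ⁻¹' U := by
    ext v
    simp only [Set.mem_preimage, Set.mem_image, Set.mem_iUnion]
    constructor
    · rintro ⟨w, hw, he⟩
      obtain ⟨a, ha⟩ := (Projectivization.mk_eq_mk_iff ℝ _ _ w.2 v.2).1 he
      refine ⟨a, ?_⟩
      have : (⟨a • v.1, (smul_ne_zero_iff_ne a).2 v.2⟩ : {v : Ed d // v ≠ 0}) = w :=
        Subtype.ext ha
      rw [this]; exact hw
    · rintro ⟨a, ha⟩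
      exact ⟨_, ha, (Projectivization.mk_eq_mk_iff ℝ _ _ _ v.2).2 ⟨a, rfl⟩⟩
  rw [h]
  refine isOpen_iUnion fun a => hU.preimage ?_
  refine Continuous.subtype_mk ?_ _
  exact continuous_subtype_val.const_smul a

lemma isOpenQuotientMap_pmk : IsOpenQuotientMap (pmk : {v : Ed d // v ≠ 0} → Pd d) :=
  IsOpenQuotientMap.iff_isOpenMap_isQuotientMap.2 ⟨isOpenMap_pmk, isQuotientMap_pmk⟩

lemma area_zero_iff {v w : Ed d} (hv : v ≠ 0) (hw : w ≠ 0) :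
    area v w = 0 ↔ Projectivization.mk ℝ v hv = Projectivization.mk ℝ w hw := by
  rw [eq_comm (a := Projectivization.mk ℝ v hv), Projectivization.mk_eq_mk_iff']
  constructor
  · intro h
    unfold area at h
    have h1 : |(inner ℝ v w : ℝ)| ≤ ‖v‖ * ‖w‖ := abs_real_inner_le_norm v w
    have h2 : (inner ℝ v w : ℝ) ^ 2 ≤ (‖v‖ * ‖w‖) ^ 2 := by
      rw [← sq_abs]; gcongr
    rw [Real.sqrt_eq_zero (by nlinarith)] at h
    have h3 : ‖(inner ℝ v w : ℝ)‖ = ‖v‖ * ‖w‖ := by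
      rw [Real.norm_eq_abs, ← abs_of_nonneg (by positivity : 0 ≤ ‖v‖ * ‖w‖), ← sq_eq_sq_iff_abs_eq_abs]
      nlinarith
    obtain ⟨r, -, hr⟩ := (norm_inner_eq_norm_iff (𝕜 := ℝ) hv hw).1 h3
    exact ⟨r, hr.symm⟩
  · rintro ⟨a, rfl⟩
    have := area_comb v 0 a 0
    simpa using this

instance instT2Pd : T2Space (Pd d) := by
  rw [t2_iff_isClosed_diagonal]
  have hq := (isOpenQuotientMap_pmk (d := d)).prodMap (isOpenQuotientMap_pmk (d := d))
  rw [← hq.isQuotientMap.isClosed_preimage]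
  have h : Prod.map pmk pmk ⁻¹' Set.diagonal (Pd d) =
      {p : {v : Ed d // v ≠ 0} × {v : Ed d // v ≠ 0} | area p.1.1 p.2.1 = 0} := by
    ext p
    exact (area_zero_iff p.1.2 p.2.2).symm
  rw [h]
  have h0 : Continuous (fun p : {v : Ed d // v ≠ 0} × {v : Ed d // v ≠ 0} => (p.1.1, p.2.1)) :=
    (continuous_subtype_val.comp continuous_fst).prodMk
      (continuous_subtype_val.comp continuous_snd)
  have hc := continuous_area.comp h0
  exact isClosed_eq hc continuous_const

instance instSCPd : SecondCountableTopology (Pd d) :=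
  isQuotientMap_pmk.secondCountableTopology isOpenMap_pmk

/-- The sphere covering projective space. -/
def pq (x : Sd d) : Pd d := Projectivization.mk ℝ (x : Ed d) (Sd_ne x)

lemma continuous_pq : Continuous (pq : Sd d → Pd d) := by
  have h : Continuous (fun x : Sd d => (⟨(x : Ed d), Sd_ne x⟩ : {v : Ed d // v ≠ 0})) :=
    Continuous.subtype_mk continuous_subtype_val _
  exact isQuotientMap_pmk.continuous.comp h

lemma pq_surj : Function.Surjective (pq : Sd d → Pd d) := by
  intro p
  induction p using Projectivization.ind with
  | h v hv =>
    have hn : ‖v‖ ≠ 0 := norm_ne_zero_iff.2 hv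
    refine ⟨⟨‖v‖⁻¹ • v, ?_⟩, ?_⟩
    · rw [mem_sphere_zero_iff_norm, norm_smul, norm_inv, norm_norm]
      exact inv_mul_cancel₀ hn
    · exact (Projectivization.mk_eq_mk_iff' ℝ _ _ _ _).2 ⟨‖v‖⁻¹, rfl⟩

instance instCompactPd : CompactSpace (Pd d) := pq_surj.compactSpace continuous_pq

lemma pact_pq (g : GLd d) (x : Sd d) : pact g (pq x) = pq (sact g x) := by
  unfold pact pq
  rw [Projectivization.map_mk]
  refine (Projectivization.mk_eq_mk_iff' ℝ _ _ _ _).2 ⟨‖glCLM g (x : Ed d)‖, ?_⟩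
  rw [sact_coe, smul_smul, mul_inv_cancel₀ (norm_ne_zero_iff.2 (glCLM_ne_zero g (Sd_ne x))),
    one_smul]
  rfl

lemma pact_mul (g h : GLd d) (p : Pd d) : pact (g * h) p = pact g (pact h p) := by
  obtain ⟨x, rfl⟩ := pq_surj p
  rw [pact_pq, pact_pq, pact_pq, sact_mul]

lemma pact_one (p : Pd d) : pact 1 p = p := by
  obtain ⟨x, rfl⟩ := pq_surj p
  rw [pact_pq, sact_one]

lemma continuous_pact : Continuous (fun p : GLd d × Pd d => pact p.1 p.2) := by
  have hq := (IsOpenQuotientMap.id (X := GLd d)).prodMap (isOpenQuotientMap_pmk (d := d))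
  rw [← hq.continuous_comp_iff]
  have h0 : Continuous (fun p : GLd d × {v : Ed d // v ≠ 0} => (p.1, p.2.1)) :=
    continuous_fst.prodMk (continuous_subtype_val.comp continuous_snd)
  have h1 := continuous_glCLM_apply.comp h0
  have h2 : Continuous (fun p : GLd d × {v : Ed d // v ≠ 0} =>
      (⟨glCLM p.1 p.2.1, glCLM_ne_zero p.1 p.2.2⟩ : {v : Ed d // v ≠ 0})) :=
    Continuous.subtype_mk h1 _
  have h3 := isQuotientMap_pmk.continuous.comp h2
  exact h3

lemma pd_bdd {f : Pd d → ℝ} (hf : Continuous f) : ∃ C, ∀ v, |f v| ≤ C := by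
  obtain ⟨C, hC⟩ := (isCompact_range hf.abs).bddAbove
  exact ⟨C, fun v => hC ⟨v, rfl⟩⟩

lemma pd_modulus {f : Pd d → ℝ} (hf : Continuous f) {ε : ℝ} (hε : 0 < ε) :
    ∃ C : ℝ, 0 ≤ C ∧ ∀ x y : Sd d, |f (pq x) - f (pq y)| ≤ ε + C * sD x y := by
  obtain ⟨B, hB⟩ := pd_bdd hf
  have hfq := hf.comp continuous_pq
  have hc : Continuous (fun p : Sd d × Sd d => |f (pq p.1) - f (pq p.2)|) := by
    have h1 := hfq.comp (continuous_fst (X := Sd d) (Y := Sd d))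
    have h2 := hfq.comp (continuous_snd (X := Sd d) (Y := Sd d))
    exact (h1.sub h2).abs
  have hK : IsCompact {p : Sd d × Sd d | ε ≤ |f (pq p.1) - f (pq p.2)|} :=
    (isClosed_le continuous_const hc).isCompact
  rcases Set.eq_empty_or_nonempty {p : Sd d × Sd d | ε ≤ |f (pq p.1) - f (pq p.2)|} with he | hne
  · refine ⟨0, le_rfl, fun x y => ?_⟩
    by_contra h
    have : (x, y) ∈ {p : Sd d × Sd d | ε ≤ |f (pq p.1) - f (pq p.2)|} := by
      simp only [Set.mem_ofPred_eq]
      linarith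
    rw [he] at this
    exact this
  · obtain ⟨p, hp, hmin⟩ := hK.exists_isMinOn hne continuous_sD.continuousOn
    have hδ : 0 < sD p.1 p.2 := by
      rcases (sD_nonneg p.1 p.2).lt_or_eq with h | h
      · exact h
      · exfalso
        have h1 : pq p.1 = pq p.2 := (area_zero_iff (Sd_ne p.1) (Sd_ne p.2)).1 h.symm
        have h2 : ε ≤ |f (pq p.1) - f (pq p.2)| := hp
        rw [h1, sub_self, abs_zero] at h2
        linarith
    have hB0 : 0 ≤ B := (abs_nonneg _).trans (hB (pq p.1))
    refine ⟨2 * B / sD p.1 p.2, by positivity, fun x y => ?_⟩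
    by_cases h : ε ≤ |f (pq x) - f (pq y)|
    · have h1 : sD p.1 p.2 ≤ sD x y := hmin (a := (x, y)) h
      have h2 : |f (pq x) - f (pq y)| ≤ 2 * B := by
        have := hB (pq x)
        have := hB (pq y)
        refine (abs_sub _ _).trans ?_
        linarith
      have h3 : 2 * B ≤ 2 * B / sD p.1 p.2 * sD x y := by
        rw [div_mul_eq_mul_div, le_div_iff₀ hδ]
        exact mul_le_mul_of_nonneg_left h1 (by positivity)
      linarith
    · push Not at h
      have h1 : 0 ≤ 2 * B / sD p.1 p.2 * sD x y :=
        mul_nonneg (by positivity) (sD_nonneg x y)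
      linarith

section final
variable {μ : Measure (GLd d)} [IsProbabilityMeasure μ] {R : ℝ}

lemma integrable_pact {η : Measure (Pd d)} [IsProbabilityMeasure η] {φ : Pd d → ℝ}
    (hφ : Continuous φ) (n : ℕ) :
    Integrable (fun p : GLd d × Pd d => φ (pact p.1 p.2)) ((mconvN μ n).prod η) := by
  obtain ⟨C, hC⟩ := pd_bdd hφ
  have hm : Measurable (fun p : GLd d × Pd d => φ (pact p.1 p.2)) :=
    (hφ.comp continuous_pact).measurable
  exact Integrable.of_bound hm.aestronglyMeasurable C (Filter.Eventually.of_forall fun p => hC _)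

lemma pact_cont_right (g : GLd d) : Continuous (fun v : Pd d => pact g v) := by
  have h := continuous_pact.comp ((continuous_const (y := g)).prodMk (continuous_id (X := Pd d)))
  exact h

lemma stat_iter {η : Measure (Pd d)} [IsProbabilityMeasure η] (hη : Stationary μ η) (n : ℕ)
    {φ : Pd d → ℝ} (hφ : Continuous φ) :
    ∫ v, φ v ∂η = ∫ g, ∫ v, φ (pact g v) ∂η ∂(mconvN μ n) := by
  cases n with
  | zero =>
    have hm : StronglyMeasurable (fun g : GLd d => ∫ v, φ (pact g v) ∂η) := by
      have hm : Measurable (fun p : GLd d × Pd d => φ (pact p.1 p.2)) :=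
        (hφ.comp continuous_pact).measurable
      exact hm.stronglyMeasurable.integral_prod_right (f := fun g v => φ (pact g v))
    rw [mconvN, integral_dirac' _ _ hm]
    simp only [pact_one]
  | succ n =>
    induction n with
    | zero =>
      rw [zero_add, mconvN_one]
      exact hη φ hφ (pd_bdd hφ)
    | succ n ih =>
      rw [integral_conv (n := n + 1) (m := 1) (integrable_pact hφ _).integral_prod_left, mconvN_one]
      rw [ih]
      congr 1
      funext g
      simp only [pact_mul]
      have hc := hφ.comp (pact_cont_right g)
      exact hη _ hc (pd_bdd hc)

lemma final_unique (hd : 2 ≤ d) (hB : Bd μ R) (hqi : QuasiIrreducible μ) (hgap : L2 μ < L1 μ)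
    (η₁ η₂ : Measure (Pd d)) [IsProbabilityMeasure η₁] [IsProbabilityMeasure η₂]
    (h₁ : Stationary μ η₁) (h₂ : Stationary μ η₂) : η₁ = η₂ := by
  obtain ⟨m, t, ρ, ht, ht1, hρ, hρ1, hcon⟩ := contraction hd hB hqi hgap
  apply ext_of_forall_integral_eq_of_IsFiniteMeasure
  intro f
  have hf : Continuous (f : Pd d → ℝ) := f.continuous
  have hne : Nonempty (Fin d) := ⟨⟨0, by omega⟩⟩
  obtain ⟨v0, hv0⟩ := exists_ne (0 : Ed d)
  obtain ⟨x0, -⟩ := pq_surj (pmk ⟨v0, hv0⟩)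
  have key : ∀ ε > 0, |∫ v, f v ∂η₁ - ∫ v, f v ∂η₂| ≤ 4 * ε := by
    intro ε hε
    obtain ⟨C, hC0, hC⟩ := pd_modulus hf hε
    have hlim : Tendsto (fun k : ℕ => C * ρ ^ k) atTop (nhds (C * 0)) :=
      (tendsto_pow_atTop_nhds_zero_of_lt_one hρ hρ1).const_mul C
    rw [mul_zero] at hlim
    obtain ⟨k, hk⟩ := (hlim.eventually (gt_mem_nhds hε)).exists
    set n := k * m with hn
    have hIntg : ∀ x : Sd d, Integrable (fun g => f (pq (sact g x))) (mconvN μ n) :=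
      fun x => integrable_sact n (hf.comp continuous_pq) x
    have hosc : ∀ x : Sd d, |(∫ g, f (pact g (pq x)) ∂(mconvN μ n)) -
        ∫ g, f (pact g (pq x0)) ∂(mconvN μ n)| ≤ 2 * ε := by
      intro x
      simp only [pact_pq]
      rw [← integral_sub (hIntg x) (hIntg x0)]
      have hb : ∀ g : GLd d, |f (pq (sact g x)) - f (pq (sact g x0))| ≤
          ε + C * sD (sact g x) (sact g x0) ^ t := by
        intro g
        refine (hC _ _).trans ?_
        have := Real.rpow_le_rpow_of_exponent_ge' (sD_nonneg (sact g x) (sact g x0))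
          (sD_le_one _ _) ht.le ht1
        rw [Real.rpow_one] at this
        have := mul_le_mul_of_nonneg_left this hC0
        linarith
      have hi : Integrable (fun g => ε + C * sD (sact g x) (sact g x0) ^ t) (mconvN μ n) :=
        (integrable_const _).add ((integrable_sDt n ht x x0).const_mul C)
      refine (norm_integral_le_integral_norm (fun g => f (pq (sact g x)) - f (pq (sact g x0)))).trans ?_
      refine (integral_mono ((hIntg x).sub (hIntg x0)).norm hi hb).trans ?_
      rw [integral_add (integrable_const _) ((integrable_sDt n ht x x0).const_mul C),
        integral_const_mul]
      simp only [integral_const, probReal_univ, smul_eq_mul, one_mul]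
      have h3 : ∫ g, sD (sact g x) (sact g x0) ^ t ∂(mconvN μ n) ≤ ρ ^ k := by
        refine (hcon k x x0).trans (mul_le_of_le_one_right (pow_nonneg hρ k) ?_)
        exact Real.rpow_le_one (sD_nonneg _ _) (sD_le_one _ _) ht.le
      have := mul_le_mul_of_nonneg_left h3 hC0
      linarith
    have hside : ∀ (η : Measure (Pd d)) [IsProbabilityMeasure η], Stationary μ η →
        |∫ v, f v ∂η - ∫ g, f (pact g (pq x0)) ∂(mconvN μ n)| ≤ 2 * ε := by
      intro η _ hη
      have hI := integrable_pact (μ := μ) (η := η) hf n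
      rw [stat_iter hη n hf, integral_integral_swap hI]
      have e : ∫ g, f (pact g (pq x0)) ∂(mconvN μ n) =
          ∫ _v : Pd d, (∫ g, f (pact g (pq x0)) ∂(mconvN μ n)) ∂η := by simp
      rw [e, ← integral_sub hI.integral_prod_right (integrable_const _)]
      have := norm_integral_le_of_norm_le_const (μ := η)
        (f := fun v => (∫ g, f (pact g v) ∂(mconvN μ n)) -
          ∫ g, f (pact g (pq x0)) ∂(mconvN μ n)) (C := 2 * ε) ?_
      · simpa using this
      · refine Filter.Eventually.of_forall fun v => ?_
        obtain ⟨x, rfl⟩ := pq_surj v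
        exact hosc x
    have a1 := abs_le.1 (hside η₁ h₁)
    have a2 := abs_le.1 (hside η₂ h₂)
    rw [abs_le]
    constructor <;> linarith [a1.1, a1.2, a2.1, a2.2]
  have h0 : |∫ v, f v ∂η₁ - ∫ v, f v ∂η₂| ≤ 0 := by
    refine le_of_forall_pos_le_add fun ε hε => ?_
    have := key (ε / 4) (by positivity)
    linarith
  exact sub_eq_zero.1 (abs_eq_zero.1 (le_antisymm h0 (abs_nonneg _)))

end final
theorem stationary_measure_unique
    (d : ℕ) (hd : 2 ≤ d) (S : Set (GLd d)) (hS : IsCompact S)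
    (μ₀ : Measure (GLd d)) [IsProbabilityMeasure μ₀] (hμ₀S : μ₀ Sᶜ = 0)
    (hqi : QuasiIrreducible μ₀) (hgap : L2 μ₀ < L1 μ₀) :
    ∀ (η₁ η₂ : Measure (Pd d)) [IsProbabilityMeasure η₁] [IsProbabilityMeasure η₂],
      Stationary μ₀ η₁ → Stationary μ₀ η₂ → η₁ = η₂ := by
  intro η₁ η₂ _ _ h₁ h₂
  obtain ⟨R, hB⟩ := exists_Bd (by omega) S hS μ₀ hμ₀S
  exact final_unique hd hB hqi hgap η₁ η₂ h₁ h₂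

end
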